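/- arXiv:2503.22440 — 2 statements merged into one kernel-verified Lean document; each statement's English description precedes it below -/
import Mathlib

section
/- Let f be a long knot and let D be a diagram of f all of whose crossings are transverse double points. Then, taking η = η_ε as specified for each ε, one has lim_{ε→0} I_X(f) = ⟨X, G_D⟩, and for all sufficiently small ε > 0 one has I_Y(f) = 0. -/
open MeasureTheory Filter Topology Set

noncomputable section

abbrev E2 : Type := EuclideanSpace ℝ (Fin 2)
abbrev E3 : Type := EuclideanSpace ℝ (Fin 3)
abbrev E4 : Type := EuclideanSpace ℝ (Fin 4)
abbrev E6 : Type := EuclideanSpace ℝ (Fin 6)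

/-- The point of `ℝ³` with the given coordinates. -/
def mk3 (x y z : ℝ) : E3 := (WithLp.equiv 2 (Fin 3 → ℝ)).symm ![x, y, z]

/-- The north pole `N = (0,0,1)` of `S² ⊆ ℝ³`. -/
def NP : E3 := mk3 0 0 1

/-- Projection of `ℝ³` onto the plane `N^⊥` (the first two coordinates). -/
def pr12 (v : E3) : ℝ × ℝ := (v 0, v 1)

/-- The `N`-coordinate. -/
def pr3 (v : E3) : ℝ := v 2

/-- `unitv v = v / ‖v‖`. -/
def unitv (v : E3) : E3 := ‖v‖⁻¹ • v

/-- Determinant of the projections to `N^⊥` of two vectors (first vector, then second). -/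
def cross2 (a b : E3) : ℝ := a 0 * b 1 - a 1 * b 0

/-- 3×3 determinant (scalar triple product); for `p ∈ S²` and `v, w` tangent to `S²` at
`p`, this is the value of the standard area form of `S²` at `p` on `(v, w)`. -/
def det3 (p v w : E3) : ℝ :=
  p 0 * (v 1 * w 2 - v 2 * w 1) - p 1 * (v 0 * w 2 - v 2 * w 0) +
    p 2 * (v 0 * w 1 - v 1 * w 0)

/-! ### Long knots and 3-component long links -/

/-- A long knot: a smooth embedding `ℝ ↪ ℝ³` which is standard outside `[-1,1]`. -/
def IsLongKnot (f : ℝ → E3) : Prop :=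
  ContDiff ℝ (⊤ : ℕ∞) f ∧ Function.Injective f ∧ (∀ t, deriv f t ≠ 0) ∧
    ∀ x : ℝ, 1 ≤ |x| → f x = mk3 x 0 0

/-- Smooth isotopy of long knots. -/
def KnotIsotopic (f₀ f₁ : ℝ → E3) : Prop :=
  ∃ H : ℝ → ℝ → E3,
    ContDiff ℝ (⊤ : ℕ∞) (fun p : ℝ × ℝ => H p.1 p.2) ∧
    (∀ s, IsLongKnot (H s)) ∧ H 0 = f₀ ∧ H 1 = f₁

/-- A 3-component long link: a smooth embedding `ℝ ⊔ ℝ ⊔ ℝ ↪ ℝ³`, standard outside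
`[-1,1]`, component `k` (for `k = 1,2,3`, i.e. index `i = k - 1 : Fin 3`) having ends
`x ↦ (x, (2 - k)|x|, 0)`. -/
def IsLongLink3 (f : Fin 3 → ℝ → E3) : Prop :=
  (∀ i, ContDiff ℝ (⊤ : ℕ∞) (f i)) ∧
  (∀ i j s t, f i s = f j t → i = j ∧ s = t) ∧
  (∀ i t, deriv (f i) t ≠ 0) ∧
  ∀ i (x : ℝ), 1 ≤ |x| → f i x = mk3 x ((1 - ((i : ℕ) : ℝ)) * |x|) 0

/-- Smooth isotopy of 3-component long links. -/
def LinkIsotopic (f₀ f₁ : Fin 3 → ℝ → E3) : Prop :=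
  ∃ H : ℝ → Fin 3 → ℝ → E3,
    (∀ i, ContDiff ℝ (⊤ : ℕ∞) (fun p : ℝ × ℝ => H p.1 i p.2)) ∧
    (∀ s, IsLongLink3 (H s)) ∧ H 0 = f₀ ∧ H 1 = f₁

/-! ### Diagrams, crossings and Gauss diagram pairings -/

/-- All self-intersections of the projection of the long knot `f` are transverse
(any two branches meeting at a multiple point have independent projected tangents). -/
def TransverseK (f : ℝ → E3) : Prop :=
  ∀ t u, t ≠ u → pr12 (f t) = pr12 (f u) → cross2 (deriv f t) (deriv f u) ≠ 0

/-- The diagram of `f` has only transverse double points. -/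
def OnlyDoubleK (f : ℝ → E3) : Prop :=
  TransverseK f ∧
  ∀ t u v : ℝ, t ≠ u → u ≠ v → t ≠ v →
    pr12 (f t) = pr12 (f u) → pr12 (f u) = pr12 (f v) → False

/-- All self-intersections of the projection of the long link `f` are transverse. -/
def TransverseL (f : Fin 3 → ℝ → E3) : Prop :=
  ∀ i j s t, (i, s) ≠ (j, t) → pr12 (f i s) = pr12 (f j t) →
    cross2 (deriv (f i) s) (deriv (f j) t) ≠ 0

/-- The diagram of the long link `f` has only transverse double points. -/
def OnlyDoubleL (f : Fin 3 → ℝ → E3) : Prop :=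
  TransverseL f ∧
  ∀ i j k s t u, (i, s) ≠ (j, t) → (j, t) ≠ (k, u) → (i, s) ≠ (k, u) →
    pr12 (f i s) = pr12 (f j t) → pr12 (f j t) = pr12 (f k u) → False

/-- Crossings of a long knot diagram: pairs `(t, u)` with `t` on the lower and `u` on the
upper strand; the corresponding chord of the Gauss diagram is directed from `t` to `u`. -/
def CrossingK (f : ℝ → E3) : Set (ℝ × ℝ) :=
  {p | p.1 ≠ p.2 ∧ pr12 (f p.1) = pr12 (f p.2) ∧ pr3 (f p.1) < pr3 (f p.2)}

/-- The sign of the crossing `p = (t, u)` (`+1` iff the projected tangent of the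
over-strand followed by that of the under-strand is a positive basis of `N^⊥`). -/
def csignK (f : ℝ → E3) (p : ℝ × ℝ) : ℝ :=
  Real.sign (cross2 (deriv f p.2) (deriv f p.1))

/-- Gauss diagram pairing for a long knot: the sum, over all pairs of chords of the Gauss
diagram of `f` in the relative position prescribed by `R`, of the products of signs. -/
def pairK (f : ℝ → E3) (R : ℝ × ℝ → ℝ × ℝ → Prop) : ℝ :=
  ∑ᶠ q ∈ {q : (ℝ × ℝ) × (ℝ × ℝ) | q.1 ∈ CrossingK f ∧ q.2 ∈ CrossingK f ∧ R q.1 q.2},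
    csignK f q.1 * csignK f q.2

/-- `⟨X, G_D⟩` : chords `x₁ → x₃` and `x₄ → x₂` with `x₁ < x₂ < x₃ < x₄`. -/
def pairXK (f : ℝ → E3) : ℝ :=
  pairK f fun p q => p.1 < q.2 ∧ q.2 < p.2 ∧ p.2 < q.1

/-- `⟨X′₁, G_D⟩` : chords `a → b` and `c → a` with `a < b < c`. -/
def pairX1K (f : ℝ → E3) : ℝ :=
  pairK f fun p q => q.2 = p.1 ∧ p.1 < p.2 ∧ p.2 < q.1

/-- `⟨X′₂, G_D⟩` : chords `a → b` and `c → b` with `a < b < c`. -/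
def pairX2K (f : ℝ → E3) : ℝ :=
  pairK f fun p q => q.2 = p.2 ∧ p.1 < p.2 ∧ p.2 < q.1

/-- `⟨X′₃, G_D⟩` : chords `a → c` and `c → b` with `a < b < c`. -/
def pairX3K (f : ℝ → E3) : ℝ :=
  pairK f fun p q => p.2 = q.1 ∧ p.1 < q.2 ∧ q.2 < p.2

/-- Crossings of a 3-strand diagram between strand `i` (under) and strand `j` (over);
the corresponding chord is directed from `p.1` on strand `i` to `p.2` on strand `j`. -/
def CrossingL (f : Fin 3 → ℝ → E3) (i j : Fin 3) : Set (ℝ × ℝ) :=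
  {p | pr12 (f i p.1) = pr12 (f j p.2) ∧ pr3 (f i p.1) < pr3 (f j p.2)}

/-- The sign of the crossing `p` between strand `i` (under) and strand `j` (over). -/
def csignL (f : Fin 3 → ℝ → E3) (i j : Fin 3) (p : ℝ × ℝ) : ℝ :=
  Real.sign (cross2 (deriv (f j) p.2) (deriv (f i) p.1))

/-- Gauss diagram pairing for a 3-component long link. -/
def pairL (f : Fin 3 → ℝ → E3) (i₁ j₁ i₂ j₂ : Fin 3) (R : ℝ × ℝ → ℝ × ℝ → Prop) : ℝ :=
  ∑ᶠ q ∈ {q : (ℝ × ℝ) × (ℝ × ℝ) |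
      q.1 ∈ CrossingL f i₁ j₁ ∧ q.2 ∈ CrossingL f i₂ j₂ ∧ R q.1 q.2},
    csignL f i₁ j₁ q.1 * csignL f i₂ j₂ q.2

/-- `⟨𝒳₁, G_D⟩` : a chord from `t` on strand 1 to strand 2, and a chord from strand 3 to
`t′` on strand 1, with `t < t′`. -/
def pairL1 (f : Fin 3 → ℝ → E3) : ℝ := pairL f 0 1 2 0 fun p q => p.1 < q.2

/-- `⟨𝒳₂, G_D⟩` : a chord from strand 1 to `u` on strand 2, and a chord from strand 3 to
`u′` on strand 2, with `u < u′`. -/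
def pairL2 (f : Fin 3 → ℝ → E3) : ℝ := pairL f 0 1 2 1 fun p q => p.2 < q.2

/-- `⟨𝒳₃, G_D⟩` : a chord from strand 1 to `v` on strand 3, and a chord from `v′` on
strand 3 to strand 2, with `v < v′`. -/
def pairL3 (f : Fin 3 → ℝ → E3) : ℝ := pairL f 0 2 2 1 fun p q => p.2 < q.1

/-- `⟨𝒳′₁, G_D⟩` : as `𝒳₁` but with `t = t′` (a triple point). -/
def pairL1' (f : Fin 3 → ℝ → E3) : ℝ := pairL f 0 1 2 0 fun p q => p.1 = q.2

/-- `⟨𝒳′₂, G_D⟩` : as `𝒳₂` but with `u = u′` (a triple point). -/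
def pairL2' (f : Fin 3 → ℝ → E3) : ℝ := pairL f 0 1 2 1 fun p q => p.2 = q.2

/-- `⟨𝒳′₃, G_D⟩` : as `𝒳₃` but with `v = v′` (a triple point). -/
def pairL3' (f : Fin 3 → ℝ → E3) : ℝ := pairL f 0 2 2 1 fun p q => p.2 = q.1

/-! ### The localized unit 2-form `η` on `S²` -/

/-- The action of a 2×2 matrix on `ℝ³ = ℝ² × ℝ`, acting on the first two coordinates. -/
def act2 (A : Matrix (Fin 2) (Fin 2) ℝ) (v : E3) : E3 :=
  mk3 (A 0 0 * v 0 + A 0 1 * v 1) (A 1 0 * v 0 + A 1 1 * v 1) (v 2)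

/-- `IsEtaForm ε g` says that `η = g · (standard area form of S²)` is a smooth 2-form on
`S²` such that: (i) `supp η` lies in the `ε`-neighbourhood of the north pole `N`;
(ii) `φ*η = det φ · η` for every `φ ∈ O(2) ⊆ O(3)` (since `φ* (area form) = det φ ·
(area form)`, this amounts to `g ∘ φ = g`); (iii) `∫_{S²} η = 1`, i.e. the integral of
`g` against the surface measure of `S²` is `1`. -/
def IsEtaForm (ε : ℝ) (g : E3 → ℝ) : Prop :=
  ContDiff ℝ (⊤ : ℕ∞) g ∧
  (∀ v : E3, ‖v‖ = 1 → g v ≠ 0 → ‖v - NP‖ < ε) ∧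
  (∀ A : Matrix (Fin 2) (Fin 2) ℝ, A * A.transpose = 1 →
    ∀ v : E3, ‖v‖ = 1 → g (act2 A v) = g v) ∧
  ∫ v : Metric.sphere (0 : E3) 1, g v ∂((volume : Measure E3).toSphere) = 1

/-! ### Configuration space integrals -/

/-- `i`-th partial derivative of a map `ℝⁿ → ℝ³`. -/
def pdv {n : ℕ} (h : EuclideanSpace ℝ (Fin n) → E3) (i : Fin n)
    (x : EuclideanSpace ℝ (Fin n)) : E3 :=
  fderiv ℝ h x (EuclideanSpace.single i 1)

/-- The pullback `h*η` (for `η = g · (area form)`) evaluated at the point `x` on the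
coordinate vectors `(e_i, e_j)`. -/
def form2 {n : ℕ} (g : E3 → ℝ) (h : EuclideanSpace ℝ (Fin n) → E3)
    (x : EuclideanSpace ℝ (Fin n)) (i j : Fin n) : ℝ :=
  g (h x) * det3 (h x) (pdv h i x) (pdv h j x)

/-- `(h*η ∧ k*η)(e₀, e₁, e₂, e₃)` at `x`. -/
def wedge22 (g : E3 → ℝ) (h k : E4 → E3) (x : E4) : ℝ :=
  (1 / 4) * ∑ σ : Equiv.Perm (Fin 4),
    ((Equiv.Perm.sign σ : ℤ) : ℝ) * form2 g h x (σ 0) (σ 1) * form2 g k x (σ 2) (σ 3)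

/-- `(h*η ∧ k*η ∧ l*η)(e₀, …, e₅)` at `x`. -/
def wedge222 (g : E3 → ℝ) (h k l : E6 → E3) (x : E6) : ℝ :=
  (1 / 8) * ∑ σ : Equiv.Perm (Fin 6),
    ((Equiv.Perm.sign σ : ℤ) : ℝ) * form2 g h x (σ 0) (σ 1) * form2 g k x (σ 2) (σ 3) *
      form2 g l x (σ 4) (σ 5)

/-- The configuration space `C_X = {x₁ < x₂ < x₃ < x₄}`. -/
def CX : Set E4 := {x | x 0 < x 1 ∧ x 1 < x 2 ∧ x 2 < x 3}

/-- The integrand `ω_X = h₁₃*η ∧ h₄₂*η` for a long knot. -/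
def omegaX (f : ℝ → E3) (g : E3 → ℝ) : E4 → ℝ :=
  wedge22 g (fun x => unitv (f (x 2) - f (x 0))) (fun x => unitv (f (x 1) - f (x 3)))

/-- The configuration space integral `I_X(f)` of a long knot. -/
def IX (f : ℝ → E3) (g : E3 → ℝ) : ℝ := ∫ x in CX, omegaX f g x

/-- The free point `x₄ ∈ ℝ³` in a `Y`-configuration `(x₁,x₂,x₃;x₄) ∈ ℝ³ × ℝ³ = ℝ⁶`. -/
def ptY (x : E6) : E3 := mk3 (x 3) (x 4) (x 5)

/-- The configuration space `C_Y(f)` for a long knot. -/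
def CY (f : ℝ → E3) : Set E6 :=
  {x | x 0 < x 1 ∧ x 1 < x 2 ∧ ptY x ≠ f (x 0) ∧ ptY x ≠ f (x 1) ∧ ptY x ≠ f (x 2)}

/-- The integrand `ω_Y = h₁₄*η ∧ h₄₂*η ∧ h₃₄*η` for a long knot. -/
def omegaY (f : ℝ → E3) (g : E3 → ℝ) : E6 → ℝ :=
  wedge222 g (fun x => unitv (ptY x - f (x 0))) (fun x => unitv (f (x 1) - ptY x))
    (fun x => unitv (ptY x - f (x 2)))

/-- The configuration space integral `I_Y(f)` of a long knot. -/
def IY (f : ℝ → E3) (g : E3 → ℝ) : ℝ := ∫ x in CY f, omegaY f g x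

def CL1 : Set E4 := {x | x 0 < x 1}
def CL2 : Set E4 := {x | x 1 < x 2}
def CL3 : Set E4 := {x | x 2 < x 3}

/-- The integrand of `I_{𝒳₁}(f)` for a 3-component long link. -/
def omegaL1 (f : Fin 3 → ℝ → E3) (g : E3 → ℝ) : E4 → ℝ :=
  wedge22 g (fun x => unitv (f 1 (x 2) - f 0 (x 0))) (fun x => unitv (f 2 (x 3) - f 0 (x 1)))

/-- The integrand of `I_{𝒳₂}(f)` for a 3-component long link. -/
def omegaL2 (f : Fin 3 → ℝ → E3) (g : E3 → ℝ) : E4 → ℝ :=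
  wedge22 g (fun x => unitv (f 1 (x 1) - f 0 (x 0))) (fun x => unitv (f 1 (x 2) - f 2 (x 3)))

/-- The integrand of `I_{𝒳₃}(f)` for a 3-component long link. -/
def omegaL3 (f : Fin 3 → ℝ → E3) (g : E3 → ℝ) : E4 → ℝ :=
  wedge22 g (fun x => unitv (f 2 (x 2) - f 0 (x 0))) (fun x => unitv (f 1 (x 1) - f 2 (x 3)))

/-- The configuration space integral `I_{𝒳₁}(f)`. -/
def IL1 (f : Fin 3 → ℝ → E3) (g : E3 → ℝ) : ℝ := ∫ x in CL1, omegaL1 f g x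

/-- The configuration space integral `I_{𝒳₂}(f)`. -/
def IL2 (f : Fin 3 → ℝ → E3) (g : E3 → ℝ) : ℝ := ∫ x in CL2, omegaL2 f g x

/-- The configuration space integral `I_{𝒳₃}(f)`. -/
def IL3 (f : Fin 3 → ℝ → E3) (g : E3 → ℝ) : ℝ := ∫ x in CL3, omegaL3 f g x

/-- The configuration space `C_𝒴(f)` for a 3-component long link. -/
def CYL (f : Fin 3 → ℝ → E3) : Set E6 :=
  {x | ptY x ≠ f 0 (x 0) ∧ ptY x ≠ f 1 (x 1) ∧ ptY x ≠ f 2 (x 2)}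

/-- The integrand `ω_𝒴 = h₁₄*η ∧ h₄₂*η ∧ h₃₄*η` for a 3-component long link. -/
def omegaYL (f : Fin 3 → ℝ → E3) (g : E3 → ℝ) : E6 → ℝ :=
  wedge222 g (fun x => unitv (ptY x - f 0 (x 0))) (fun x => unitv (f 1 (x 1) - ptY x))
    (fun x => unitv (ptY x - f 2 (x 2)))

/-- The configuration space integral `I_𝒴(f)`. -/
def ILY (f : Fin 3 → ℝ → E3) (g : E3 → ℝ) : ℝ := ∫ x in CYL f, omegaYL f g x

/-! ### Model triple points -/

/-- The affine parametrization `t ↦ a + t • v` of a straight segment. -/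
def seg (a v : E3) (t : ℝ) : E3 := a + t • v

/-- A model triple point: three straight segments `S₁, S₂, S₃` (indexed by `0, 1, 2`),
`S_k` parametrized by `seg (a k) (v k) : (-δ, δ) → ℝ³`, all parallel to the plane
`N^⊥`, whose projections to `N^⊥` meet pairwise transversely at the single common point
which is the projection of each midpoint `a k`, and with `S₂` higher than `S₁`, `S₃`. -/
def IsModelTriple (a v : Fin 3 → E3) : Prop :=
  (∀ k, v k 2 = 0) ∧ (∀ k, v k ≠ 0) ∧
  pr12 (a 0) = pr12 (a 1) ∧ pr12 (a 1) = pr12 (a 2) ∧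
  (∀ j k, j ≠ k → cross2 (v j) (v k) ≠ 0) ∧
  a 0 2 < a 1 2 ∧ a 2 2 < a 1 2

/-- A model triple point of type `(←, s₁, s₂, s₃)`: `S₁` passes over `S₃`, and the signs
of the crossings `S₁–S₃`, `S₁–S₂`, `S₂–S₃` are `s₁, s₂, s₃` respectively. -/
def ModelLeft (a v : Fin 3 → E3) (s1 s2 s3 : ℝ) : Prop :=
  IsModelTriple a v ∧ a 2 2 < a 0 2 ∧
  s1 = Real.sign (cross2 (v 0) (v 2)) ∧
  s2 = Real.sign (cross2 (v 1) (v 0)) ∧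
  s3 = Real.sign (cross2 (v 1) (v 2))

/-- A model triple point of type `(→, s₁, s₂, s₃)`: `S₃` passes over `S₁`, and the signs
of the crossings `S₁–S₃`, `S₁–S₂`, `S₂–S₃` are `s₁, s₂, s₃` respectively. -/
def ModelRight (a v : Fin 3 → E3) (s1 s2 s3 : ℝ) : Prop :=
  IsModelTriple a v ∧ a 0 2 < a 2 2 ∧
  s1 = Real.sign (cross2 (v 2) (v 0)) ∧
  s2 = Real.sign (cross2 (v 1) (v 0)) ∧
  s3 = Real.sign (cross2 (v 1) (v 2))

/-- The cube `(-δ, δ)⁴ ⊆ ℝ⁴`. -/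
def cube4 (δ : ℝ) : Set E4 := {x | ∀ i, |x i| < δ}

/-- The model configuration space integral `I_X^{X′₁}`: the two points `t₁ < t₂` lie on
`S₁`, the point `t₃` on `S₂` and the point `t₄` on `S₃`; the maps are
`h₁₃ = unit (f₂(t₃) - f₁(t₁))` and `h₄₂ = unit (f₁(t₂) - f₃(t₄))`. -/
def IX1model (a v : Fin 3 → E3) (δ : ℝ) (g : E3 → ℝ) : ℝ :=
  ∫ x in cube4 δ ∩ {x : E4 | x 0 < x 1},
    wedge22 g (fun x => unitv (seg (a 1) (v 1) (x 2) - seg (a 0) (v 0) (x 0)))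
      (fun x => unitv (seg (a 0) (v 0) (x 1) - seg (a 2) (v 2) (x 3))) x

/-- The model configuration space integral `I_X^{X′₂}` (`(X′₂, l)` for a model of type
`←`, `(X′₂, r)` for a model of type `→`): the two points `t₂ < t₃` lie on `S₂`, the
point `t₁` on `S₁` and the point `t₄` on `S₃`; the maps are
`h₁₃ = unit (f₂(t₃) - f₁(t₁))` and `h₄₂ = unit (f₂(t₂) - f₃(t₄))`. -/
def IX2model (a v : Fin 3 → E3) (δ : ℝ) (g : E3 → ℝ) : ℝ :=
  ∫ x in cube4 δ ∩ {x : E4 | x 1 < x 2},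
    wedge22 g (fun x => unitv (seg (a 1) (v 1) (x 2) - seg (a 0) (v 0) (x 0)))
      (fun x => unitv (seg (a 1) (v 1) (x 1) - seg (a 2) (v 2) (x 3))) x

/-- The model configuration space integral `I_X^{X′₃}`: the two points `t₃ < t₄` lie on
`S₃`, the point `t₁` on `S₁` and the point `t₂` on `S₂`; the maps are
`h₁₃ = unit (f₃(t₃) - f₁(t₁))` and `h₄₂ = unit (f₂(t₂) - f₃(t₄))`. -/
def IX3model (a v : Fin 3 → E3) (δ : ℝ) (g : E3 → ℝ) : ℝ :=
  ∫ x in cube4 δ ∩ {x : E4 | x 2 < x 3},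
    wedge22 g (fun x => unitv (seg (a 2) (v 2) (x 2) - seg (a 0) (v 0) (x 0)))
      (fun x => unitv (seg (a 1) (v 1) (x 1) - seg (a 2) (v 2) (x 3))) x

/-- The model `Y`-integral `I_Y^{s₁,s₂,s₃}` over `(-δ,δ)³ × ℝ³`: the point `t_k` lies on
`S_k` and `x₄ ∈ ℝ³` is free; the maps are `h₁₄ = unit (x₄ - f₁(t₁))`,
`h₄₂ = unit (f₂(t₂) - x₄)` and `h₃₄ = unit (x₄ - f₃(t₃))`. -/
def IYmodel (a v : Fin 3 → E3) (δ : ℝ) (g : E3 → ℝ) : ℝ :=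
  ∫ x in {x : E6 | |x 0| < δ ∧ |x 1| < δ ∧ |x 2| < δ ∧
      ptY x ≠ seg (a 0) (v 0) (x 0) ∧ ptY x ≠ seg (a 1) (v 1) (x 1) ∧
      ptY x ≠ seg (a 2) (v 2) (x 2)},
    wedge222 g (fun x => unitv (ptY x - seg (a 0) (v 0) (x 0)))
      (fun x => unitv (seg (a 1) (v 1) (x 1) - ptY x))
      (fun x => unitv (ptY x - seg (a 2) (v 2) (x 2))) x

/-- Near every (triple or higher) multiple point of the diagram, the strands of the long
knot `f` are straight segments parallel to the plane `N^⊥`. -/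
def StraightNearMultipleK (f : ℝ → E3) : Prop :=
  ∀ t u v : ℝ, t ≠ u → u ≠ v → t ≠ v →
    pr12 (f t) = pr12 (f u) → pr12 (f u) = pr12 (f v) →
    ∃ δ > (0 : ℝ), ∃ w : E3, w 2 = 0 ∧ ∀ s : ℝ, |s - t| < δ → f s = f t + (s - t) • w

/-- Near every (triple or higher) multiple point of the diagram, the strands of the long
link `f` are straight segments parallel to the plane `N^⊥`. -/
def StraightNearMultipleL (f : Fin 3 → ℝ → E3) : Prop :=
  ∀ (i j k : Fin 3) (t u v : ℝ), (i, t) ≠ (j, u) → (j, u) ≠ (k, v) → (i, t) ≠ (k, v) →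
    pr12 (f i t) = pr12 (f j u) → pr12 (f j u) = pr12 (f k v) →
    ∃ δ > (0 : ℝ), ∃ w : E3, w 2 = 0 ∧ ∀ s : ℝ, |s - t| < δ → f i s = f i t + (s - t) • w

/-! ### Closed 2-component links and the linking number -/

/-- A smooth loop in `ℝ³`, parametrized with period 1 and injective on a period. -/
def IsLoop (f : ℝ → E3) : Prop :=
  ContDiff ℝ (⊤ : ℕ∞) f ∧ (∀ t, f (t + 1) = f t) ∧ (∀ t, deriv f t ≠ 0) ∧
    ∀ s t : ℝ, f s = f t → ∃ n : ℤ, t - s = n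

/-- The diagram of the 2-component link `(f 0, f 1)` has only transverse double points. -/
def OnlyDouble2 (f : Fin 2 → ℝ → E3) : Prop :=
  (∀ i j s t, f i s ≠ f j t → pr12 (f i s) = pr12 (f j t) →
      cross2 (deriv (f i) s) (deriv (f j) t) ≠ 0) ∧
  ∀ i j k s t u, f i s ≠ f j t → f j t ≠ f k u → f i s ≠ f k u →
    pr12 (f i s) = pr12 (f j t) → pr12 (f j t) = pr12 (f k u) → False

/-- The crossings of the diagram at which `f₂` passes over `f₁` (one parameter period). -/
def Crossing12 (f₁ f₂ : ℝ → E3) : Set (ℝ × ℝ) :=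
  {p | p.1 ∈ Ico (0 : ℝ) 1 ∧ p.2 ∈ Ico (0 : ℝ) 1 ∧
    pr12 (f₁ p.1) = pr12 (f₂ p.2) ∧ pr3 (f₁ p.1) < pr3 (f₂ p.2)}

/-- The sum of the signs of the crossings of the diagram at which `f₂` passes over `f₁`;
this is the linking number `lk(f₁, f₂)`, i.e. the mapping degree of
`h : S¹ × S¹ → S²`. -/
def lkSum (f₁ f₂ : ℝ → E3) : ℝ :=
  ∑ᶠ p ∈ Crossing12 f₁ f₂, Real.sign (cross2 (deriv f₂ p.2) (deriv f₁ p.1))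

/-- The fundamental domain `[0,1) × [0,1)` of `S¹ × S¹`. -/
def sq01 : Set E2 := {x | x 0 ∈ Ico (0 : ℝ) 1 ∧ x 1 ∈ Ico (0 : ℝ) 1}

/-- `∫_{S¹×S¹} h*η` for `h(x₁,x₂) = unit (f₂(x₂) - f₁(x₁))`. -/
def lkIntegral (f₁ f₂ : ℝ → E3) (g : E3 → ℝ) : ℝ :=
  ∫ x in sq01, form2 g (fun x : E2 => unitv (f₂ (x 1) - f₁ (x 0))) x 0 1

@[simp] lemma mk3_zero (a b c : ℝ) : mk3 a b c 0 = a := rfl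
@[simp] lemma mk3_one (a b c : ℝ) : mk3 a b c 1 = b := rfl
@[simp] lemma mk3_two (a b c : ℝ) : mk3 a b c 2 = c := rfl

lemma E3_norm_sq (v : E3) : ‖v‖ ^ 2 = v 0 ^ 2 + v 1 ^ 2 + v 2 ^ 2 := by
  rw [EuclideanSpace.norm_sq_eq]; simp [Fin.sum_univ_three]

lemma E3_ext {v w : E3} (h0 : v 0 = w 0) (h1 : v 1 = w 1) (h2 : v 2 = w 2) : v = w := by
  ext i; fin_cases i <;> assumption

lemma abs_coord_le (v : E3) (i : Fin 3) : |v i| ≤ ‖v‖ := by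
  simpa using PiLp.norm_apply_le v i

lemma norm_unitv {v : E3} (hv : v ≠ 0) : ‖unitv v‖ = 1 := by
  have : ‖v‖ ≠ 0 := norm_ne_zero_iff.2 hv
  simp [unitv, norm_smul, this]

lemma steep_of_near {ε : ℝ} (h1 : ε ≤ 1 / 2) {v : E3} (hv : v ≠ 0)
    (h : ‖unitv v - NP‖ < ε) :
    0 < v 2 ∧ |v 0| ≤ 2 * ε * v 2 ∧ |v 1| ≤ 2 * ε * v 2 ∧ ‖v‖ ≤ 2 * v 2 := by
  have hn : 0 < ‖v‖ := norm_pos_iff.2 hv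
  have a0 := (abs_coord_le (unitv v - NP) 0).trans_lt h
  have a1 := (abs_coord_le (unitv v - NP) 1).trans_lt h
  have a2 := (abs_coord_le (unitv v - NP) 2).trans_lt h
  simp only [unitv, NP, PiLp.sub_apply, PiLp.smul_apply, smul_eq_mul, mk3_zero, mk3_one,
    mk3_two, sub_zero, abs_mul, abs_inv, abs_norm] at a0 a1 a2
  have e0 : 0 < ε := (norm_nonneg _).trans_lt h
  have b0 : |v 0| < ε * ‖v‖ := by
    rw [inv_mul_lt_iff₀ hn] at a0; linarith
  have b1 : |v 1| < ε * ‖v‖ := by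
    rw [inv_mul_lt_iff₀ hn] at a1; linarith
  have b2 : ‖v‖ < 2 * v 2 := by
    have := (abs_lt.1 a2).1
    have h3 : 1 / 2 < ‖v‖⁻¹ * v 2 := by linarith
    rw [lt_inv_mul_iff₀ hn] at h3; linarith
  refine ⟨by linarith, ?_, ?_, b2.le⟩ <;> nlinarith

/-- The density of the pulled back form in the two parameters `(s, t)`. -/
def AA (f : ℝ → E3) (g : E3 → ℝ) (p : ℝ × ℝ) : ℝ :=
  g (unitv (f p.2 - f p.1)) *
    (det3 (f p.2 - f p.1) (-deriv f p.1) (deriv f p.2) / ‖f p.2 - f p.1‖ ^ 3)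

lemma det3_lin (l a b : ℝ) (p v w : E3) :
    det3 (l • p) (l • v + a • p) (l • w + b • p) = l ^ 3 * det3 p v w := by
  simp only [det3, PiLp.smul_apply, PiLp.add_apply, smul_eq_mul]; ring

lemma pdv_unitv {n : ℕ} {D : EuclideanSpace ℝ (Fin n) → E3} {x : EuclideanSpace ℝ (Fin n)}
    (hd : DifferentiableAt ℝ D x) (hne : D x ≠ 0) (i : Fin n) :
    ∃ a : ℝ, pdv (fun y => unitv (D y)) i x = ‖D x‖⁻¹ • pdv D i x + a • D x := by
  have hc : DifferentiableAt ℝ (fun y => ‖D y‖⁻¹) x :=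
    (hd.norm ℝ hne).inv (norm_ne_zero_iff.2 hne)
  refine ⟨fderiv ℝ (fun y => ‖D y‖⁻¹) x (EuclideanSpace.single i 1), ?_⟩
  have := (hc.hasFDerivAt.smul hd.hasFDerivAt).fderiv
  unfold pdv unitv
  erw [this]
  simp

lemma form2_unitv {n : ℕ} (g : E3 → ℝ) {D : EuclideanSpace ℝ (Fin n) → E3}
    {x : EuclideanSpace ℝ (Fin n)}
    (hd : DifferentiableAt ℝ D x) (hne : D x ≠ 0) (i j : Fin n) :
    form2 g (fun y => unitv (D y)) x i j =
      g (unitv (D x)) * (det3 (D x) (pdv D i x) (pdv D j x) / ‖D x‖ ^ 3) := by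
  obtain ⟨a, ha⟩ := pdv_unitv hd hne i
  obtain ⟨b, hb⟩ := pdv_unitv hd hne j
  unfold form2
  rw [ha, hb]
  have h : det3 (unitv (D x)) (‖D x‖⁻¹ • pdv D i x + a • D x) (‖D x‖⁻¹ • pdv D j x + b • D x) =
      ‖D x‖⁻¹ ^ 3 * det3 (D x) (pdv D i x) (pdv D j x) := det3_lin _ _ _ _ _ _
  rw [inv_pow, inv_mul_eq_div] at h
  rw [← h]

lemma hasFDerivAt_chord {n : ℕ} {f : ℝ → E3} (hf : Differentiable ℝ f) (a b : Fin n)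
    (x : EuclideanSpace ℝ (Fin n)) :
    HasFDerivAt (fun y : EuclideanSpace ℝ (Fin n) => f (y a) - f (y b))
      ((EuclideanSpace.proj a : EuclideanSpace ℝ (Fin n) →L[ℝ] ℝ).smulRight (deriv f (x a)) -
       (EuclideanSpace.proj b : EuclideanSpace ℝ (Fin n) →L[ℝ] ℝ).smulRight (deriv f (x b))) x := by
  have h (c : Fin n) : HasFDerivAt (fun y : EuclideanSpace ℝ (Fin n) => f (y c))
      ((EuclideanSpace.proj c : EuclideanSpace ℝ (Fin n) →L[ℝ] ℝ).smulRight (deriv f (x c))) x := by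
    have h1 : HasFDerivAt (fun y : EuclideanSpace ℝ (Fin n) => y c)
      (EuclideanSpace.proj c : EuclideanSpace ℝ (Fin n) →L[ℝ] ℝ) x :=
      (EuclideanSpace.proj c : EuclideanSpace ℝ (Fin n) →L[ℝ] ℝ).hasFDerivAt
    have h2 := ((hf (x c)).hasDerivAt).hasFDerivAt.comp x h1
    convert! h2 using 1
  exact (h a).sub (h b)

lemma pdv_chord {n : ℕ} {f : ℝ → E3} (hf : Differentiable ℝ f) (a b i : Fin n)
    (x : EuclideanSpace ℝ (Fin n)) :
    pdv (fun y : EuclideanSpace ℝ (Fin n) => f (y a) - f (y b)) i x =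
      (if a = i then deriv f (x a) else 0) - (if b = i then deriv f (x b) else 0) := by
  unfold pdv
  rw [(hasFDerivAt_chord hf a b x).fderiv]
  simp

lemma form2_chord {n : ℕ} {f : ℝ → E3} (g : E3 → ℝ) (hf : Differentiable ℝ f)
    {a b : Fin n} (hab : a ≠ b)
    (x : EuclideanSpace ℝ (Fin n)) (hne : f (x a) ≠ f (x b)) (i j : Fin n) :
    form2 g (fun y => unitv (f (y a) - f (y b))) x i j =
      AA f g (x b, x a) *
        (((if i = b ∧ j = a then 1 else if i = a ∧ j = b then -1 else 0 : ℤ)) : ℝ) := by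
  rw [form2_unitv g (D := fun y => f (y a) - f (y b))
    (hasFDerivAt_chord hf a b x).differentiableAt (sub_ne_zero.2 hne)]
  simp only [pdv_chord hf, AA]
  rw [mul_assoc, div_mul_eq_mul_div]
  congr 2
  by_cases h1 : a = i <;> by_cases h2 : b = i <;> by_cases h3 : a = j <;> by_cases h4 : b = j <;>
    simp_all [det3, eq_comm] <;> ring

lemma wedge22_sum : ∑ σ : Equiv.Perm (Fin 4), ((Equiv.Perm.sign σ : ℤ)) *
    (if σ 0 = 0 ∧ σ 1 = 2 then 1 else if σ 0 = 2 ∧ σ 1 = 0 then -1 else 0 : ℤ) *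
    (if σ 2 = 3 ∧ σ 3 = 1 then 1 else if σ 2 = 1 ∧ σ 3 = 3 then -1 else 0 : ℤ) = 4 := by
  decide

lemma omegaX_eq {f : ℝ → E3} (g : E3 → ℝ) (hf : Differentiable ℝ f)
    (hi : Function.Injective f) {x : E4} (hx : x ∈ CX) :
    omegaX f g x = AA f g (x 0, x 2) * AA f g (x 3, x 1) := by
  obtain ⟨h1, h2, h3⟩ := hx
  have n1 : f (x 2) ≠ f (x 0) := fun h => by have := hi h; linarith
  have n2 : f (x 1) ≠ f (x 3) := fun h => by have := hi h; linarith
  unfold omegaX wedge22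
  simp only [form2_chord g hf (show (2 : Fin 4) ≠ 0 by decide) x n1,
    form2_chord g hf (show (1 : Fin 4) ≠ 3 by decide) x n2]
  have key := congrArg (fun z : ℤ => (z : ℝ)) wedge22_sum
  simp only [Int.cast_sum, Int.cast_mul] at key
  have e : (AA f g (x 0, x 2) * AA f g (x 3, x 1)) =
      1 / 4 * ((AA f g (x 0, x 2) * AA f g (x 3, x 1)) * ((4 : ℤ) : ℝ)) := by push_cast; ring
  rw [e, ← key]
  simp only [Finset.mul_sum]
  refine Finset.sum_congr rfl fun σ _ => ?_
  ring

/-- Coordinates on the configuration space adapted to the two chords. -/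
def T4 (q : (ℝ × ℝ) × (ℝ × ℝ)) : E4 := WithLp.toLp 2 ![q.1.1, q.2.2, q.1.2, q.2.1]

/-- The splitting `ℝ³ = ℝ² × ℝ`. -/
def T3 (q : (ℝ × ℝ) × ℝ) : E3 := mk3 q.1.1 q.1.2 q.2

lemma continuous_T4 : Continuous T4 := by
  unfold T4
  refine (PiLp.continuous_toLp 2 _).comp (continuous_pi fun i => ?_)
  fin_cases i <;> simp <;> fun_prop

lemma continuous_T3 : Continuous T3 := by
  unfold T3 mk3
  refine (PiLp.continuous_toLp 2 _).comp (continuous_pi fun i => ?_)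
  fin_cases i <;> simp <;> fun_prop

lemma inj_T4 : Function.Injective T4 := by
  rintro ⟨⟨a, b⟩, ⟨c, d⟩⟩ ⟨⟨a', b'⟩, ⟨c', d'⟩⟩ h
  have h0 := congrFun (congrArg WithLp.ofLp h) 0
  have h1 := congrFun (congrArg WithLp.ofLp h) 1
  have h2 := congrFun (congrArg WithLp.ofLp h) 2
  have h3 := congrFun (congrArg WithLp.ofLp h) 3
  simp [T4] at h0 h1 h2 h3
  simp [*]

lemma inj_T3 : Function.Injective T3 := by
  rintro ⟨⟨a, b⟩, c⟩ ⟨⟨a', b'⟩, c'⟩ h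
  have h0 := congrFun (congrArg WithLp.ofLp h) 0
  have h1 := congrFun (congrArg WithLp.ofLp h) 1
  have h2 := congrFun (congrArg WithLp.ofLp h) 2
  simp [T3] at h0 h1 h2
  simp [*]

lemma emb_T4 : MeasurableEmbedding T4 := continuous_T4.measurableEmbedding inj_T4
lemma emb_T3 : MeasurableEmbedding T3 := continuous_T3.measurableEmbedding inj_T3

lemma mp_T4 : MeasurePreserving T4 volume volume := by
  have h : MeasurePreserving (fun q : (ℝ × ℝ) × (ℝ × ℝ) =>
      (![q.1.1, q.2.2, q.1.2, q.2.1] : Fin 4 → ℝ)) volume volume := by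
    have hm : Measurable (fun q : (ℝ × ℝ) × (ℝ × ℝ) =>
      (![q.1.1, q.2.2, q.1.2, q.2.1] : Fin 4 → ℝ)) := by
      refine measurable_pi_iff.2 fun i => ?_
      fin_cases i <;> simp <;> fun_prop
    refine ⟨hm, ?_⟩
    rw [volume_pi]
    refine (Measure.pi_eq fun s hs => ?_).symm
    rw [Measure.map_apply hm (MeasurableSet.univ_pi hs)]
    have : (fun q : (ℝ × ℝ) × (ℝ × ℝ) => (![q.1.1, q.2.2, q.1.2, q.2.1] : Fin 4 → ℝ)) ⁻¹'
        (univ.pi s) = (s 0 ×ˢ s 2) ×ˢ (s 3 ×ˢ s 1) := by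
      ext q
      simp only [mem_preimage, mem_univ_pi, Fin.forall_fin_succ, mem_prod]
      simp
      tauto
    rw [this, Measure.volume_eq_prod, Measure.prod_prod, Measure.volume_eq_prod,
      Measure.prod_prod, Measure.prod_prod]
    simp [Fin.prod_univ_four]
    ring
  exact (PiLp.volume_preserving_toLp (Fin 4)).comp h

lemma mp_T3 : MeasurePreserving T3 volume volume := by
  have h : MeasurePreserving (fun q : (ℝ × ℝ) × ℝ =>
      (![q.1.1, q.1.2, q.2] : Fin 3 → ℝ)) volume volume := by
    have hm : Measurable (fun q : (ℝ × ℝ) × ℝ =>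
      (![q.1.1, q.1.2, q.2] : Fin 3 → ℝ)) := by
      refine measurable_pi_iff.2 fun i => ?_
      fin_cases i <;> simp <;> fun_prop
    refine ⟨hm, ?_⟩
    rw [volume_pi]
    refine (Measure.pi_eq fun s hs => ?_).symm
    rw [Measure.map_apply hm (MeasurableSet.univ_pi hs)]
    have : (fun q : (ℝ × ℝ) × ℝ => (![q.1.1, q.1.2, q.2] : Fin 3 → ℝ)) ⁻¹'
        (univ.pi s) = (s 0 ×ˢ s 1) ×ˢ s 2 := by
      ext q
      simp only [mem_preimage, mem_univ_pi, Fin.forall_fin_succ, mem_prod]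
      simp
      tauto
    rw [this, Measure.volume_eq_prod, Measure.prod_prod, Measure.volume_eq_prod,
      Measure.prod_prod]
    simp [Fin.prod_univ_three]
  exact (PiLp.volume_preserving_toLp (Fin 3)).comp h

lemma sphere_integral (g : E3 → ℝ) :
    ∫ x : E3, (if ‖x‖ < 1 then g (unitv x) else 0) =
      (1 / 3) * ∫ v : Metric.sphere (0 : E3) 1, g v ∂((volume : Measure E3).toSphere) := by
  have hfin : Module.finrank ℝ E3 = 3 := by simp
  calc ∫ x : E3, (if ‖x‖ < 1 then g (unitv x) else 0)
      = ∫ x : ({(0)}ᶜ : Set E3), (if ‖x.1‖ < 1 then g (unitv x.1) else 0)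
          ∂((volume : Measure E3).comap (↑)) := by
        rw [integral_subtype_comap (measurableSet_singleton _).compl
          fun x : E3 ↦ (if ‖x‖ < 1 then g (unitv x) else 0),
        restrict_compl_singleton]
    _ = ∫ x, g x.1 * (if x.2.1 < 1 then 1 else 0)
        ∂(volume : Measure E3).toSphere.prod (.volumeIoiPow (Module.finrank ℝ E3 - 1)) := by
      rw [← (volume : Measure E3).measurePreserving_homeomorphUnitSphereProd.integral_comp
        (Homeomorph.measurableEmbedding _)]
      congr 1
      ext x
      simp [unitv]
    _ = (∫ v : Metric.sphere (0 : E3) 1, g v ∂((volume : Measure E3).toSphere)) *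
        ∫ r : Ioi (0 : ℝ), (if r.1 < 1 then 1 else 0) ∂(Measure.volumeIoiPow 2) := by
      rw [hfin]
      exact integral_prod_mul (fun v : Metric.sphere (0 : E3) 1 => g v)
        (fun r : Ioi (0 : ℝ) => (if r.1 < 1 then (1 : ℝ) else 0))
    _ = _ := by
      have : ∫ r : Ioi (0 : ℝ), (if r.1 < 1 then (1 : ℝ) else 0) ∂(Measure.volumeIoiPow 2) =
          1 / 3 := by
        have h1 : (fun r : Ioi (0 : ℝ) => (if r.1 < 1 then (1 : ℝ) else 0)) =
          (Iio (⟨1, mem_Ioi.2 one_pos⟩ : Ioi (0 : ℝ))).indicator (fun _ => (1 : ℝ)) := by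
          ext r
          simp only [indicator, mem_Iio, ← Subtype.coe_lt_coe]
        rw [h1, integral_indicator measurableSet_Iio]
        simp only [integral_const, smul_eq_mul, mul_one, Measure.real,
          Measure.restrict_apply_univ, Measure.volumeIoiPow_apply_Iio]
        norm_num
      rw [this]; ring

/-- The density of `η` in gnomonic coordinates around the north pole. -/
def rho (g : E3 → ℝ) (p : ℝ × ℝ) : ℝ := g (unitv (T3 (p, 1))) / ‖T3 (p, 1)‖ ^ 3

lemma T3_ne (p : ℝ × ℝ) {z : ℝ} (hz : z ≠ 0) : T3 (p, z) ≠ 0 := by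
  intro h
  have := congrFun (congrArg WithLp.ofLp h) 2
  simp [T3] at this
  exact hz this

lemma unitv_smul {z : ℝ} (hz : 0 < z) (v : E3) : unitv (z • v) = unitv v := by
  unfold unitv
  rw [norm_smul, Real.norm_of_nonneg hz.le, smul_smul]
  congr 1
  field_simp

lemma T3_smul (z : ℝ) (p : ℝ × ℝ) : T3 (z • p, z) = z • T3 (p, 1) := by
  apply E3_ext <;> simp [T3]

lemma norm_unitv_le (v : E3) : ‖unitv v‖ ≤ 1 := by
  by_cases h : v = 0
  · simp [h, unitv]
  · exact (norm_unitv h).le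

lemma measurable_unitv : Measurable unitv := by
  unfold unitv; fun_prop

lemma continuous_rho {g : E3 → ℝ} (hg : Continuous g) : Continuous (rho g) := by
  have h1 : Continuous fun p : ℝ × ℝ => T3 (p, 1) := continuous_T3.comp (by fun_prop)
  have h2 : ∀ p : ℝ × ℝ, ‖T3 (p, 1)‖ ≠ 0 := fun p => norm_ne_zero_iff.2 (T3_ne p one_ne_zero)
  unfold rho unitv
  refine Continuous.div (hg.comp ((h1.norm.inv₀ h2).smul h1)) (h1.norm.pow 3) ?_
  intro p; exact pow_ne_zero _ (h2 p)

lemma one_le_norm_T3 (p : ℝ × ℝ) : 1 ≤ ‖T3 (p, 1)‖ := by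
  have := abs_coord_le (T3 (p, 1)) 2
  simpa [T3] using this

lemma T3_supp {ε : ℝ} (h1 : ε ≤ 1 / 2) {g : E3 → ℝ} (hg : IsEtaForm ε g) {p : ℝ × ℝ}
    {z : ℝ} (hne : T3 (p, z) ≠ 0) (h : g (unitv (T3 (p, z))) ≠ 0) :
    0 < z ∧ |p.1| ≤ 2 * ε * z ∧ |p.2| ≤ 2 * ε * z := by
  have h2 := hg.2.1 _ (norm_unitv hne) h
  have := steep_of_near h1 hne h2
  simp [T3] at this
  exact ⟨this.1, this.2.1, this.2.2.1⟩

lemma rho_supp {ε : ℝ} (h1 : ε ≤ 1 / 2) {g : E3 → ℝ} (hg : IsEtaForm ε g) {p : ℝ × ℝ}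
    (h : rho g p ≠ 0) : ‖p‖ ≤ 2 * ε := by
  have h2 : g (unitv (T3 (p, 1))) ≠ 0 := by
    intro h3; apply h; simp [rho, h3]
  have := T3_supp h1 hg (T3_ne p one_ne_zero) h2
  rw [Prod.norm_def]
  simp only [Real.norm_eq_abs]
  apply max_le <;> linarith [this.2.1, this.2.2]

lemma rho_integrable {ε : ℝ} (h1 : ε ≤ 1 / 2) {g : E3 → ℝ} (hg : IsEtaForm ε g) :
    Integrable (rho g) := by
  refine (continuous_rho hg.1.continuous).integrable_of_hasCompactSupport ?_
  refine HasCompactSupport.intro (isCompact_closedBall (0 : ℝ × ℝ) (2 * ε)) fun p hp => ?_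
  by_contra h
  exact hp (by simpa using rho_supp h1 hg h)

lemma inner_z (n : ℝ) (hn : 0 < n) :
    ∫ z : ℝ, (if 0 < z ∧ z * n < 1 then z ^ 2 else 0) = 1 / 3 / n ^ 3 := by
  have h1 : (fun z : ℝ => (if 0 < z ∧ z * n < 1 then z ^ 2 else 0)) =
      (Ioo (0 : ℝ) (1 / n)).indicator (fun z => z ^ 2) := by
    ext z
    simp only [indicator, mem_Ioo, lt_div_iff₀ hn]
  rw [h1, integral_indicator measurableSet_Ioo, ← integral_Ioc_eq_integral_Ioo,
    ← intervalIntegral.integral_of_le (by positivity), integral_pow]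
  norm_num
  ring

lemma rho_integral {ε : ℝ} (h1 : ε ≤ 1 / 2) {g : E3 → ℝ} (hg : IsEtaForm ε g) :
    ∫ p, rho g p = 1 := by
  have hs := sphere_integral g
  rw [hg.2.2.2] at hs
  obtain ⟨C, hC⟩ := (isCompact_closedBall (0 : E3) 1).exists_bound_of_continuousOn
    hg.1.continuous.continuousOn
  have hCu : ∀ v, ‖g (unitv v)‖ ≤ C := fun v => hC _ (by simpa using norm_unitv_le v)
  have hC0 : 0 ≤ C := (norm_nonneg _).trans (hCu 0)
  have hmu : Measurable fun v : E3 => g (unitv v) := hg.1.continuous.measurable.comp measurable_unitv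
  set F : E3 → ℝ := fun x => if ‖x‖ < 1 then g (unitv x) else 0 with hF
  have hFm : Measurable F := Measurable.ite (measurableSet_lt measurable_norm measurable_const)
    hmu measurable_const
  have hFi : Integrable F := by
    rw [← integrableOn_iff_integrable_of_support_subset (s := Metric.ball 0 1)]
    · refine Measure.integrableOn_of_bounded (M := C) measure_ball_lt_top.ne
        hFm.aestronglyMeasurable (Eventually.of_forall fun x => ?_)
      simp only [hF]; split_ifs
      · exact hCu x
      · simpa using hC0
    · intro x hx
      by_contra h
      apply hx
      simp only [hF]
      rw [if_neg (by simpa using h)]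
  have hF3 : Integrable (fun q => F (T3 q)) := (mp_T3.integrable_comp_emb emb_T3).2 hFi
  rw [← mp_T3.integral_comp emb_T3, Measure.volume_eq_prod, integral_prod_symm _ hF3] at hs
  set H : (ℝ × ℝ) × ℝ → ℝ := fun q => g (unitv (T3 (q.1, 1))) *
    (if 0 < q.2 ∧ q.2 * ‖T3 (q.1, 1)‖ < 1 then q.2 ^ 2 else 0) with hH
  have hslice : ∀ z : ℝ, ∫ p : ℝ × ℝ, F (T3 (p, z)) = ∫ p, H (p, z) := by
    intro z
    by_cases hz : 0 < z
    · have hsm := Measure.integral_comp_smul (volume : Measure (ℝ × ℝ))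
        (fun p => F (T3 (p, z))) z
      have hd : Module.finrank ℝ (ℝ × ℝ) = 2 := by simp
      rw [hd, abs_of_pos (by positivity), smul_eq_mul, eq_inv_mul_iff_mul_eq₀ (by positivity)] at hsm
      rw [← hsm, ← integral_const_mul]
      congr 1
      ext p
      simp only [hF, hH, T3_smul, unitv_smul hz, norm_smul, Real.norm_of_nonneg hz.le]
      simp only [hz, true_and]
      split_ifs <;> ring
    · have e1 : ∀ p, H (p, z) = 0 := fun p => by simp [hH, hz]
      have e2 : ∀ p : ℝ × ℝ, p ≠ 0 → F (T3 (p, z)) = 0 := by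
        intro p hp
        by_contra h
        have hne : T3 (p, z) ≠ 0 := by
          intro h0
          have h00 := congrFun (congrArg WithLp.ofLp h0) 0
          have h01 := congrFun (congrArg WithLp.ofLp h0) 1
          simp [T3] at h00 h01
          exact hp (Prod.ext h00 h01)
        have hgg : g (unitv (T3 (p, z))) ≠ 0 := by
          intro h0; apply h; simp [hF, h0]
        exact hz (T3_supp h1 hg hne hgg).1
      simp only [e1, integral_zero]
      refine integral_eq_zero_of_ae ?_
      filter_upwards [compl_mem_ae_iff.2 (measure_singleton (0 : ℝ × ℝ))] with p hp
      exact e2 p hp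
  simp only [hslice] at hs
  have hc1 : Continuous fun q : (ℝ × ℝ) × ℝ => T3 (q.1, 1) := continuous_T3.comp (by fun_prop)
  have hHm : Measurable H := by
    refine (hmu.comp hc1.measurable).mul (Measurable.ite ?_ (by fun_prop) measurable_const)
    exact (measurableSet_lt measurable_const measurable_snd).inter
      (measurableSet_lt (measurable_snd.mul hc1.norm.measurable) measurable_const)
  have hHi : Integrable H := by
    rw [← integrableOn_iff_integrable_of_support_subset (s := Metric.closedBall 0 1)]
    · refine Measure.integrableOn_of_bounded (M := C) measure_closedBall_lt_top.ne
        hHm.aestronglyMeasurable (Eventually.of_forall fun q => ?_)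
      simp only [hH, norm_mul]
      refine (mul_le_mul (hCu _) ?_ (norm_nonneg _) hC0).trans (mul_one C).le
      split_ifs with h
      · have := one_le_norm_T3 q.1
        rw [Real.norm_of_nonneg (by positivity)]
        have : q.2 ≤ 1 := by nlinarith
        nlinarith
      · simp
    · intro q hq
      simp only [hH, Function.mem_support, ne_eq, mul_eq_zero, not_or] at hq
      obtain ⟨ha, hb⟩ := hq
      have hh : 0 < q.2 ∧ q.2 * ‖T3 (q.1, 1)‖ < 1 := by
        by_contra h; exact hb (if_neg h)
      have h3 := T3_supp h1 hg (T3_ne q.1 one_ne_zero) ha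
      have := one_le_norm_T3 q.1
      have h4 : q.2 ≤ 1 := by nlinarith
      simp only [Metric.mem_closedBall, dist_zero_right, Prod.norm_def, Real.norm_eq_abs,
        sup_le_iff]
      refine ⟨⟨by linarith [h3.2.1], by linarith [h3.2.2]⟩, by rw [abs_of_pos hh.1]; exact h4⟩
  have hsw := integral_prod_symm (μ := (volume : Measure (ℝ × ℝ))) (ν := (volume : Measure ℝ)) H hHi
  rw [← hsw, integral_prod _ hHi] at hs
  have : ∀ p : ℝ × ℝ, ∫ z, H (p, z) = (1 / 3) * rho g p := by
    intro p
    simp only [hH, integral_const_mul]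
    rw [inner_z _ (by linarith [one_le_norm_T3 p]), rho]
    ring
  simp only [this, integral_const_mul] at hs
  linarith

/-- The chord vector from the point with parameter `p.1` to that with parameter `p.2`. -/
def Dl (f : ℝ → E3) (p : ℝ × ℝ) : E3 := f p.2 - f p.1

/-- Gnomonic coordinates of the chord direction. -/
def Psi (f : ℝ → E3) (p : ℝ × ℝ) : ℝ × ℝ := (Dl f p 0 / Dl f p 2, Dl f p 1 / Dl f p 2)

/-- The Jacobian matrix of `Psi`. -/
def PsiMat (f : ℝ → E3) (p : ℝ × ℝ) : Matrix (Fin 2) (Fin 2) ℝ :=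
  !![(-deriv f p.1 0 * Dl f p 2 + Dl f p 0 * deriv f p.1 2) / Dl f p 2 ^ 2,
     (deriv f p.2 0 * Dl f p 2 - Dl f p 0 * deriv f p.2 2) / Dl f p 2 ^ 2;
     (-deriv f p.1 1 * Dl f p 2 + Dl f p 1 * deriv f p.1 2) / Dl f p 2 ^ 2,
     (deriv f p.2 1 * Dl f p 2 - Dl f p 1 * deriv f p.2 2) / Dl f p 2 ^ 2]

/-- The derivative of `Psi`. -/
def PsiD (f : ℝ → E3) (p : ℝ × ℝ) : ℝ × ℝ →L[ℝ] ℝ × ℝ :=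
  (Matrix.toLin (.finTwoProd ℝ) (.finTwoProd ℝ) (PsiMat f p)).toContinuousLinearMap

/-- The numerator of the Jacobian determinant. -/
def JJ (f : ℝ → E3) (p : ℝ × ℝ) : ℝ := det3 (Dl f p) (-deriv f p.1) (deriv f p.2)

lemma PsiD_det {f : ℝ → E3} {p : ℝ × ℝ} (h : Dl f p 2 ≠ 0) :
    (PsiD f p).det = JJ f p / Dl f p 2 ^ 3 := by
  unfold PsiD PsiMat JJ
  simp only [LinearMap.det_toContinuousLinearMap, LinearMap.det_toLin,
    Matrix.det_fin_two_of, det3, PiLp.neg_apply]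
  field_simp
  ring

lemma contDiff_coord {f : ℝ → E3} (hf : ContDiff ℝ (⊤ : ℕ∞) f) (i : Fin 3) :
    ContDiff ℝ (⊤ : ℕ∞) (fun t => f t i) :=
  (EuclideanSpace.proj i : E3 →L[ℝ] ℝ).contDiff.comp hf

lemma hasDerivAt_coord {f : ℝ → E3} (hf : ContDiff ℝ (⊤ : ℕ∞) f) (i : Fin 3) (t : ℝ) :
    HasDerivAt (fun t => f t i) (deriv f t i) t := by
  have h := ((hf.differentiable (by simp)) t).hasDerivAt
  exact ((EuclideanSpace.proj i : E3 →L[ℝ] ℝ).hasFDerivAt.comp_hasDerivAt t h)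

lemma hasFDerivAt_Dl {f : ℝ → E3} (hf : ContDiff ℝ (⊤ : ℕ∞) f) (i : Fin 3) (p : ℝ × ℝ) :
    HasFDerivAt (fun p => Dl f p i) ((deriv f p.2 i) • ContinuousLinearMap.snd ℝ ℝ ℝ -
      (deriv f p.1 i) • ContinuousLinearMap.fst ℝ ℝ ℝ) p := by
  have h1 := (hasDerivAt_coord hf i p.2).hasFDerivAt.comp p
    (hasFDerivAt_snd : HasFDerivAt Prod.snd (ContinuousLinearMap.snd ℝ ℝ ℝ) p)
  have h2 := (hasDerivAt_coord hf i p.1).hasFDerivAt.comp p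
    (hasFDerivAt_fst : HasFDerivAt Prod.fst (ContinuousLinearMap.fst ℝ ℝ ℝ) p)
  refine (h1.sub h2).congr_fderiv ?_
  ext <;> simp

lemma hasFDerivAt_Psi {f : ℝ → E3} (hf : ContDiff ℝ (⊤ : ℕ∞) f) {p : ℝ × ℝ}
    (h : Dl f p 2 ≠ 0) : HasFDerivAt (Psi f) (PsiD f p) p := by
  unfold PsiD PsiMat
  rw [Matrix.toLin_finTwoProd_toContinuousLinearMap]
  have hi (i : Fin 3) := (hasFDerivAt_Dl hf i p).mul
    ((hasDerivAt_inv h).hasFDerivAt.comp p (hasFDerivAt_Dl hf 2 p))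
  refine HasFDerivAt.prodMk ?_ ?_
  · refine (hi 0).congr_fderiv ?_
    ext <;> simp <;> field_simp <;> ring
  · refine (hi 1).congr_fderiv ?_
    ext <;> simp <;> field_simp <;> ring

lemma contDiffAt_Psi {f : ℝ → E3} (hf : ContDiff ℝ (⊤ : ℕ∞) f) {p : ℝ × ℝ}
    (h : Dl f p 2 ≠ 0) : ContDiffAt ℝ (⊤ : ℕ∞) (Psi f) p := by
  have hi (i : Fin 3) : ContDiffAt ℝ (⊤ : ℕ∞) (fun p => Dl f p i) p :=
    (((contDiff_coord hf i).comp contDiff_snd).sub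
      ((contDiff_coord hf i).comp contDiff_fst)).contDiffAt
  exact ((hi 0).div (hi 2) h).prodMk ((hi 1).div (hi 2) h)

lemma continuous_Dl {f : ℝ → E3} (hf : ContDiff ℝ (⊤ : ℕ∞) f) : Continuous (Dl f) := by
  have := hf.continuous
  unfold Dl; fun_prop

lemma continuous_JJ {f : ℝ → E3} (hf : ContDiff ℝ (⊤ : ℕ∞) f) : Continuous (JJ f) := by
  have h1 := continuous_Dl hf
  have h2 : Continuous (deriv f) := hf.continuous_deriv (by simp)
  unfold JJ det3; fun_prop

lemma AA_eq {f : ℝ → E3} (g : E3 → ℝ) {p : ℝ × ℝ} (h : 0 < Dl f p 2) {σ : ℝ} (hσ : σ * σ = 1)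
    (hJ : 0 < σ * JJ f p) : AA f g p = σ * (|(PsiD f p).det| • rho g (Psi f p)) := by
  have e1 : T3 (Psi f p, 1) = (Dl f p 2)⁻¹ • Dl f p := by
    apply E3_ext <;> simp [T3, Psi, h.ne'] <;> ring
  have hn : Dl f p ≠ 0 := by
    intro h0; rw [h0] at h; simp at h
  have hn' : 0 < ‖Dl f p‖ := norm_pos_iff.2 hn
  have e2 : |(PsiD f p).det| = σ * JJ f p / Dl f p 2 ^ 3 := by
    rw [PsiD_det h.ne', ← abs_of_pos (div_pos hJ (pow_pos h 3))]
    rw [abs_div, abs_div, abs_mul]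
    have : |σ| = 1 := by
      rcases mul_self_eq_one_iff.1 hσ with h | h <;> simp [h]
    rw [this, one_mul]
  rw [e2, rho, e1, unitv_smul (by positivity), norm_smul, Real.norm_of_nonneg (by positivity)]
  unfold AA
  change g (unitv (Dl f p)) * (JJ f p / ‖Dl f p‖ ^ 3) = _
  rw [smul_eq_mul]
  field_simp
  linear_combination (-g (unitv (Dl f p)) * JJ f p) * hσ

lemma local_integral {f : ℝ → E3} (hf : ContDiff ℝ (⊤ : ℕ∞) f) {p₀ : ℝ × ℝ}
    (hp : p₀ ∈ CrossingK f) (hc : cross2 (deriv f p₀.2) (deriv f p₀.1) ≠ 0)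
    {O : Set (ℝ × ℝ)} (hO : O ∈ 𝓝 p₀) :
    ∃ U ⊆ O, IsOpen U ∧ p₀ ∈ U ∧ (∀ p ∈ U, p ∈ CrossingK f → p = p₀) ∧
      ∃ ε₀ > (0 : ℝ), ∀ ε, 0 < ε → ε < ε₀ → ∀ g, IsEtaForm ε g →
        IntegrableOn (AA f g) U ∧ ∫ p in U, AA f g p = csignK f p₀ := by
  have hcross : ∀ p ∈ CrossingK f, 0 < Dl f p 2 ∧ Dl f p 0 = 0 ∧ Dl f p 1 = 0 := by
    rintro p ⟨-, h2, h3⟩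
    simp only [pr12, pr3, Prod.mk.injEq] at h2 h3
    simp only [Dl, PiLp.sub_apply]
    exact ⟨by linarith, by linarith [h2.1], by linarith [h2.2]⟩
  obtain ⟨hz, hx, hy⟩ := hcross p₀ hp
  have hPsi0 : ∀ p ∈ CrossingK f, Psi f p = 0 := by
    intro p hp
    obtain ⟨hz, hx, hy⟩ := hcross p hp
    simp [Psi, hx, hy]
  have hJ0 : JJ f p₀ = Dl f p₀ 2 * cross2 (deriv f p₀.2) (deriv f p₀.1) := by
    simp only [JJ, det3, cross2, hx, hy, PiLp.neg_apply]; ring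
  set σ := csignK f p₀ with hσd
  have hσ : σ * σ = 1 ∧ 0 < σ * cross2 (deriv f p₀.2) (deriv f p₀.1) := by
    rw [hσd, csignK]
    rcases lt_or_gt_of_ne hc with h | h
    · rw [Real.sign_of_neg h]; constructor <;> linarith
    · rw [Real.sign_of_pos h]; constructor <;> linarith
  have hσJ : 0 < σ * JJ f p₀ := by
    rw [hJ0]; nlinarith [mul_pos hz hσ.2]
  have hdet : (PsiD f p₀).det ≠ 0 := by
    rw [PsiD_det hz.ne', hJ0]
    exact div_ne_zero (mul_ne_zero hz.ne' hc) (pow_ne_zero _ hz.ne')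
  let e : (ℝ × ℝ) ≃L[ℝ] (ℝ × ℝ) := (PsiD f p₀).toContinuousLinearEquivOfDetNeZero hdet
  have hstrict : HasStrictFDerivAt (Psi f) (e : (ℝ × ℝ) →L[ℝ] (ℝ × ℝ)) p₀ := by
    have := (contDiffAt_Psi hf hz.ne').hasStrictFDerivAt' (hasFDerivAt_Psi hf hz.ne') (by simp)
    simpa [e] using this
  set H := hstrict.toOpenPartialHomeomorph (Psi f) with hH
  have hHc : (H : ℝ × ℝ → ℝ × ℝ) = Psi f := hstrict.toOpenPartialHomeomorph_coe
  obtain ⟨O', hO'O, hO', hpO'⟩ := mem_nhds_iff.1 hO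
  let U := (H.source ∩ O') ∩ ({p | 0 < Dl f p 2} ∩ {p | 0 < σ * JJ f p})
  have hcD : Continuous fun p => Dl f p 2 := by have := continuous_Dl hf; fun_prop
  have hUo : IsOpen U := (H.open_source.inter hO').inter
    ((isOpen_lt continuous_const hcD).inter
      (isOpen_lt continuous_const (continuous_const.mul (continuous_JJ hf))))
  have hpU : p₀ ∈ U := ⟨⟨hstrict.mem_toOpenPartialHomeomorph_source, hpO'⟩, hz, hσJ⟩
  have hinj : InjOn (Psi f) U := by
    rw [← hHc]; exact H.injOn.mono fun p hp => hp.1.1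
  have himo : IsOpen (Psi f '' U) := by
    rw [← hHc]; exact H.isOpen_image_of_subset_source hUo fun p hp => hp.1.1
  have h0 : (0 : ℝ × ℝ) ∈ Psi f '' U := ⟨p₀, hpU, hPsi0 _ hp⟩
  obtain ⟨δ, hδ, hball⟩ := Metric.isOpen_iff.1 himo 0 h0
  refine ⟨U, fun p hp => hO'O hp.1.2, hUo, hpU, ?_, min (1 / 2) (δ / 2), by positivity, ?_⟩
  · intro p hpU' hpc
    exact hinj hpU' hpU (by rw [hPsi0 p hpc, hPsi0 _ hp])
  · intro ε hε hε' g hg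
    have hε1 : ε ≤ 1 / 2 := (hε'.trans_le (min_le_left _ _)).le
    have hε2 : ε < δ / 2 := hε'.trans_le (min_le_right _ _)
    have hder : ∀ p ∈ U, HasFDerivWithinAt (Psi f) (PsiD f p) U p := fun p hp =>
      (hasFDerivAt_Psi hf (ne_of_gt hp.2.1)).hasFDerivWithinAt
    have hAA : ∀ p ∈ U, AA f g p = σ * (|(PsiD f p).det| • rho g (Psi f p)) := fun p hp =>
      AA_eq g hp.2.1 hσ.1 hp.2.2
    have hi := (integrableOn_image_iff_integrableOn_abs_det_fderiv_smul volume
      hUo.measurableSet hder hinj (rho g)).1 (rho_integrable hε1 hg).integrableOn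
    have hii := integral_image_eq_integral_abs_det_fderiv_smul volume
      hUo.measurableSet hder hinj (rho g)
    refine ⟨(integrableOn_congr_fun hAA hUo.measurableSet).2 (hi.const_mul σ), ?_⟩
    rw [setIntegral_congr_fun hUo.measurableSet hAA, integral_const_mul, ← hii,
      setIntegral_eq_integral_of_forall_compl_eq_zero, rho_integral hε1 hg, mul_one]
    intro p hp
    by_contra hr
    apply hp
    apply hball
    have := rho_supp hε1 hg hr
    simp only [Metric.mem_ball, dist_zero_right]
    linarith

/-- The averaged chord direction, which extends continuously over the diagonal. -/
def Phi (f : ℝ → E3) (p : ℝ × ℝ) : E3 := ∫ r in (0 : ℝ)..1, deriv f (p.1 + r * (p.2 - p.1))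

lemma continuous_Phi {f : ℝ → E3} (hf : ContDiff ℝ (⊤ : ℕ∞) f) : Continuous (Phi f) := by
  have h2 : Continuous (deriv f) := hf.continuous_deriv (by simp)
  unfold Phi
  apply intervalIntegral.continuous_parametric_intervalIntegral_of_continuous'
  simp only [Function.uncurry_def]
  fun_prop

lemma Phi_diag (f : ℝ → E3) (s : ℝ) : Phi f (s, s) = deriv f s := by
  simp [Phi]

lemma smul_Phi {f : ℝ → E3} (hf : ContDiff ℝ (⊤ : ℕ∞) f) (s t : ℝ) :
    (t - s) • Phi f (s, t) = f t - f s := by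
  have h2 : Continuous (deriv f) := hf.continuous_deriv (by simp)
  unfold Phi
  rw [← intervalIntegral.integral_smul]
  have h := intervalIntegral.integral_eq_sub_of_hasDerivAt (a := 0) (b := 1)
    (f := fun r : ℝ => f (s + r * (t - s))) (f' := fun r => (t - s) • deriv f (s + r * (t - s)))
    (by
      intro r _
      have h1 := ((hf.differentiable (by simp)) (s + r * (t - s))).hasDerivAt
      have h3 : HasDerivAt (fun r : ℝ => s + r * (t - s)) (t - s) r := by
        simpa using ((hasDerivAt_id r).mul_const (t - s)).const_add s
      exact h1.scomp r h3)
    (by apply Continuous.intervalIntegrable; fun_prop)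
  simpa using h

/-- A vector within a narrow cone about the upward vertical. -/
def Steep (e : ℝ) (v : E3) : Prop := |v 0| ≤ e * v 2 ∧ |v 1| ≤ e * v 2

lemma Steep.smul {e : ℝ} {v : E3} (h : Steep e v) {c : ℝ} (hc : 0 ≤ c) : Steep e (c • v) := by
  obtain ⟨h0, h1⟩ := h
  simp only [Steep, PiLp.smul_apply, smul_eq_mul, abs_mul, abs_of_nonneg hc]
  constructor <;> nlinarith

lemma Steep.add {e : ℝ} {v w : E3} (h : Steep e v) (h' : Steep e w) : Steep e (v + w) := by
  obtain ⟨h0, h1⟩ := h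
  obtain ⟨h0', h1'⟩ := h'
  simp only [Steep, PiLp.add_apply]
  constructor
  · nlinarith [abs_add_le (v 0) (w 0)]
  · nlinarith [abs_add_le (v 1) (w 1)]

lemma Steep.mono {e e' : ℝ} {v : E3} (h : Steep e v) (he : 0 < e) (hee : e ≤ e') : Steep e' v := by
  obtain ⟨h0, h1⟩ := h
  have : 0 ≤ v 2 := by
    have := (abs_nonneg _).trans h0
    exact nonneg_of_mul_nonneg_right this he
  constructor
  · nlinarith
  · nlinarith

lemma steep_of_supp {ε e : ℝ} {g : E3 → ℝ} (hg : IsEtaForm ε g) (h1 : ε ≤ 1 / 2) (he : 2 * ε ≤ e)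
    {v : E3} (hv : v ≠ 0) (h : g (unitv v) ≠ 0) : Steep e v := by
  obtain ⟨a, b, c, -⟩ := steep_of_near h1 hv (hg.2.1 _ (norm_unitv hv) h)
  constructor <;> nlinarith

lemma isClosed_steep (e : ℝ) : IsClosed {v : E3 | Steep e v} := by
  simp only [Steep, ofPred_and]
  apply IsClosed.inter <;> apply isClosed_le <;> fun_prop

lemma steep_Phi {f : ℝ → E3} (hf : ContDiff ℝ (⊤ : ℕ∞) f) {e s t : ℝ} (hst : s < t)
    (h : Steep e (f t - f s)) : Steep e (Phi f (s, t)) := by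
  have : Phi f (s, t) = (t - s)⁻¹ • (f t - f s) := by
    rw [← smul_Phi hf, smul_smul, inv_mul_cancel₀ (by linarith), one_smul]
  rw [this]
  exact h.smul (by rw [inv_nonneg]; linarith)

lemma steep_neg_Phi {f : ℝ → E3} (hf : ContDiff ℝ (⊤ : ℕ∞) f) {e s t : ℝ} (hst : s < t)
    (h : Steep e (f s - f t)) : Steep e (-Phi f (s, t)) := by
  have : -Phi f (s, t) = (t - s)⁻¹ • (f s - f t) := by
    rw [← neg_sub (f t), ← smul_Phi hf, smul_neg, smul_smul, inv_mul_cancel₀ (by linarith),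
      one_smul]
  rw [this]
  exact h.smul (by rw [inv_nonneg]; linarith)

lemma steep_limit {v : E3} (h : ∀ n : ℕ, Steep (1 / ((n : ℝ) + 2)) v) :
    v 0 = 0 ∧ v 1 = 0 ∧ 0 ≤ v 2 := by
  have hl : Tendsto (fun n : ℕ => 1 / ((n : ℝ) + 2) * v 2) atTop (𝓝 (0 * v 2)) := by
    apply Tendsto.mul_const
    have := (tendsto_one_div_add_atTop_nhds_zero_nat (𝕜 := ℝ)).comp (tendsto_add_atTop_nat 1)
    refine this.congr fun n => ?_
    simp [add_assoc]; norm_num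
  rw [zero_mul] at hl
  have h0 : |v 0| ≤ 0 := ge_of_tendsto' hl fun n => (h n).1
  have h1 : |v 1| ≤ 0 := ge_of_tendsto' hl fun n => (h n).2
  refine ⟨abs_nonpos_iff.1 h0, abs_nonpos_iff.1 h1, ?_⟩
  have := (abs_nonneg _).trans (h 0).1
  norm_num at this
  linarith

lemma up_cases {f : ℝ → E3} (hf : IsLongKnot f) {s t c : ℝ} (hst : s ≤ t) (hc : c ≠ 0)
    (h0 : Phi f (s, t) 0 = 0) (h1 : Phi f (s, t) 1 = 0) (h2 : 0 ≤ c * Phi f (s, t) 2) :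
    (s < t ∧ pr12 (f s) = pr12 (f t) ∧ c * pr3 (f s) < c * pr3 (f t)) ∨
    (s = t ∧ deriv f s 0 = 0 ∧ deriv f s 1 = 0 ∧ 0 < c * deriv f s 2) := by
  rcases hst.lt_or_eq with h | rfl
  · left
    have hs := smul_Phi hf.1 s t
    have e0 := congrArg (fun v : E3 => v 0) hs
    have e1 := congrArg (fun v : E3 => v 1) hs
    have e2 := congrArg (fun v : E3 => v 2) hs
    simp only [PiLp.smul_apply, PiLp.sub_apply, smul_eq_mul, h0, h1, mul_zero] at e0 e1 e2
    refine ⟨h, by simp only [pr12, Prod.mk.injEq]; constructor <;> linarith, ?_⟩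
    have hne : Phi f (s, t) 2 ≠ 0 := by
      intro h3
      rw [h3, mul_zero] at e2
      refine h.ne (hf.2.1 (E3_ext ?_ ?_ ?_)) <;> linarith
    have : 0 < c * Phi f (s, t) 2 := lt_of_le_of_ne h2 (mul_ne_zero hc hne).symm
    simp only [pr3]
    have h5 := mul_pos (sub_pos.2 h) this
    have h6 : c * f t 2 - c * f s 2 = (t - s) * (c * Phi f (s, t) 2) := by
      linear_combination (-c) * e2
    linarith
  · right
    rw [Phi_diag] at *
    refine ⟨rfl, h0, h1, lt_of_le_of_ne h2 (mul_ne_zero hc ?_).symm⟩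
    intro h3
    refine hf.2.2.1 s (E3_ext ?_ ?_ ?_) <;> simpa

lemma Phi_bound {f : ℝ → E3} (hf : IsLongKnot f) :
    ∃ R : ℝ, ∀ s t, s ≤ t → |Phi f (s, t) 0| ≤ 1 / 2 * |Phi f (s, t) 2| → |s| ≤ R ∧ |t| ≤ R := by
  have hc := hf.1.continuous
  obtain ⟨M, hM⟩ := (isCompact_Icc (a := (-1 : ℝ)) (b := 1)).exists_bound_of_continuousOn
    hc.continuousOn
  have hM' : ∀ x, |x| ≤ 1 → ∀ i, |f x i| ≤ M := fun x hx i =>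
    (abs_coord_le _ _).trans (hM x (abs_le.1 hx))
  have hM0 : 0 ≤ M := (abs_nonneg _).trans (hM' 0 (by simp) 0)
  have hout : ∀ x, ¬ |x| ≤ 1 → f x 0 = x ∧ f x 2 = 0 := by
    intro x hx
    rw [hf.2.2.2 x (by linarith)]; simp
  refine ⟨2 * M + 1, fun s t hst h => ?_⟩
  rcases hst.lt_or_eq with hlt | rfl
  · have hs := smul_Phi hf.1 s t
    have e0 := congrArg (fun v : E3 => v 0) hs
    have e2 := congrArg (fun v : E3 => v 2) hs
    simp only [PiLp.smul_apply, PiLp.sub_apply, smul_eq_mul] at e0 e2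
    have key : |f t 0 - f s 0| ≤ 1 / 2 * |f t 2 - f s 2| := by
      rw [← e0, ← e2, abs_mul, abs_mul]
      nlinarith [abs_nonneg (t - s)]
    by_cases hs1 : |s| ≤ 1 <;> by_cases ht1 : |t| ≤ 1
    · constructor <;> linarith
    · obtain ⟨a, b⟩ := hout t ht1
      have c0 := hM' s hs1 0
      have c2 := hM' s hs1 2
      rw [a, b, zero_sub, abs_neg] at key
      have := abs_sub_abs_le_abs_sub t (f s 0)
      constructor <;> linarith
    · obtain ⟨a, b⟩ := hout s hs1
      have c0 := hM' t ht1 0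
      have c2 := hM' t ht1 2
      rw [a, b, sub_zero, abs_sub_comm] at key
      have := abs_sub_abs_le_abs_sub s (f t 0)
      constructor <;> linarith
    · obtain ⟨a, b⟩ := hout s hs1
      obtain ⟨a', b'⟩ := hout t ht1
      rw [a, b, a', b'] at key
      simp at key
      linarith
  · by_cases hs1 : |s| ≤ 1
    · constructor <;> linarith
    · exfalso
      rw [Phi_diag] at h
      have hd : HasDerivAt f (mk3 1 0 0) s := by
        have h1 : HasDerivAt (fun x : ℝ => x • mk3 1 0 0) (mk3 1 0 0) s := by
          simpa using (hasDerivAt_id s).smul_const (mk3 1 0 0)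
        refine h1.congr_of_eventuallyEq ?_
        have : ∀ᶠ x in 𝓝 s, 1 < |x| :=
          continuous_abs.continuousAt.eventually_const_lt (by linarith)
        filter_upwards [this] with x hx
        rw [hf.2.2.2 x hx.le]
        apply E3_ext <;> simp
      rw [hd.deriv] at h
      simp at h
      norm_num at h

lemma Phi_bound_steep {f : ℝ → E3} (hf : IsLongKnot f) :
    ∃ R : ℝ, ∀ s t e, s ≤ t → 0 < e → e ≤ 1 / 2 →
      (Steep e (Phi f (s, t)) ∨ Steep e (-Phi f (s, t))) → |s| ≤ R ∧ |t| ≤ R := by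
  obtain ⟨R, hR⟩ := Phi_bound hf
  refine ⟨R, fun s t e hst he he' h => hR s t hst ?_⟩
  rcases h with h | h
  · have := (h.mono he he').1
    linarith [le_abs_self (Phi f (s, t) 2)]
  · have := (h.mono he he').1
    simp only [PiLp.neg_apply, abs_neg] at this
    linarith [neg_le_abs (Phi f (s, t) 2)]

/-- The compact set of degenerate-allowed `X`-configurations with steep chords. -/
def ZX (f : ℝ → E3) (e : ℝ) : Set ((ℝ × ℝ) × (ℝ × ℝ)) :=
  {q | (q.1.1 ≤ q.2.2 ∧ q.2.2 ≤ q.1.2 ∧ q.1.2 ≤ q.2.1) ∧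
    Steep e (Phi f (q.1.1, q.1.2)) ∧ Steep e (-Phi f (q.2.2, q.2.1))}

/-- The compact set of degenerate-allowed triples with steep chords. -/
def ZY (f : ℝ → E3) (e : ℝ) : Set (ℝ × ℝ × ℝ) :=
  {q | (q.1 ≤ q.2.1 ∧ q.2.1 ≤ q.2.2) ∧
    Steep e (Phi f (q.1, q.2.1)) ∧ Steep e (-Phi f (q.2.1, q.2.2))}

/-- Pairs of crossings contributing to `X`. -/
def KX (f : ℝ → E3) : Set ((ℝ × ℝ) × (ℝ × ℝ)) :=
  {q | q.1 ∈ CrossingK f ∧ q.2 ∈ CrossingK f ∧ q.1.1 < q.2.2 ∧ q.2.2 < q.1.2 ∧ q.1.2 < q.2.1}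

lemma isCompact_ZX {f : ℝ → E3} (hf : IsLongKnot f) {e : ℝ} (he : 0 < e) (he' : e ≤ 1 / 2) :
    IsCompact (ZX f e) := by
  obtain ⟨R, hR⟩ := Phi_bound_steep hf
  have hc := continuous_Phi hf.1
  have hcl : IsClosed (ZX f e) := by
    simp only [ZX, ofPred_and]
    refine IsClosed.inter ?_ (IsClosed.inter ?_ ?_)
    · refine IsClosed.inter ?_ (IsClosed.inter ?_ ?_) <;> apply isClosed_le <;> fun_prop
    · exact (isClosed_steep e).preimage (by fun_prop)
    · exact (isClosed_steep e).preimage (by fun_prop)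
  refine ((isCompact_Icc (a := (-R)) (b := R)).prod (isCompact_Icc (a := (-R)) (b := R))).prod
    ((isCompact_Icc (a := (-R)) (b := R)).prod (isCompact_Icc (a := (-R)) (b := R)))
      |>.of_isClosed_subset hcl ?_
  rintro ⟨⟨a, c⟩, ⟨d, b⟩⟩ ⟨⟨h1, h2, h3⟩, h4, h5⟩
  simp only at h1 h2 h3 h4 h5
  have r1 := hR a c e (h1.trans h2) he he' (Or.inl h4)
  have r2 := hR b d e (h2.trans h3) he he' (Or.inr h5)
  exact ⟨⟨abs_le.1 r1.1, abs_le.1 r1.2⟩, abs_le.1 r2.2, abs_le.1 r2.1⟩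

lemma isCompact_ZY {f : ℝ → E3} (hf : IsLongKnot f) {e : ℝ} (he : 0 < e) (he' : e ≤ 1 / 2) :
    IsCompact (ZY f e) := by
  obtain ⟨R, hR⟩ := Phi_bound_steep hf
  have hc := continuous_Phi hf.1
  have hcl : IsClosed (ZY f e) := by
    simp only [ZY, ofPred_and]
    refine IsClosed.inter ?_ (IsClosed.inter ?_ ?_)
    · refine IsClosed.inter ?_ ?_ <;> apply isClosed_le <;> fun_prop
    · exact (isClosed_steep e).preimage (by fun_prop)
    · exact (isClosed_steep e).preimage (by fun_prop)
  refine ((isCompact_Icc (a := (-R)) (b := R)).prod ((isCompact_Icc (a := (-R)) (b := R)).prod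
    (isCompact_Icc (a := (-R)) (b := R)))) |>.of_isClosed_subset hcl ?_
  rintro ⟨a, b, c⟩ ⟨⟨h1, h2⟩, h4, h5⟩
  simp only at h1 h2 h4 h5
  have r1 := hR a b e h1 he he' (Or.inl h4)
  have r2 := hR b c e h2 he he' (Or.inr h5)
  exact ⟨abs_le.1 r1.1, abs_le.1 r1.2, abs_le.1 r2.2⟩

lemma ZX_mono {f : ℝ → E3} {e e' : ℝ} (he : 0 < e) (hee : e ≤ e') : ZX f e ⊆ ZX f e' :=
  fun _ h => ⟨h.1, h.2.1.mono he hee, h.2.2.mono he hee⟩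

lemma ZY_mono {f : ℝ → E3} {e e' : ℝ} (he : 0 < e) (hee : e ≤ e') : ZY f e ⊆ ZY f e' :=
  fun _ h => ⟨h.1, h.2.1.mono he hee, h.2.2.mono he hee⟩

lemma cross2_left {a b : E3} (h0 : a 0 = 0) (h1 : a 1 = 0) : cross2 a b = 0 := by
  simp [cross2, h0, h1]

lemma inter_ZX {f : ℝ → E3} (hf : IsLongKnot f) (hD : OnlyDoubleK f)
    {q : (ℝ × ℝ) × (ℝ × ℝ)} (h : ∀ n : ℕ, q ∈ ZX f (1 / ((n : ℝ) + 2))) : q ∈ KX f := by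
  obtain ⟨⟨a, c⟩, ⟨d, b⟩⟩ := q
  obtain ⟨h1, h2, h3⟩ := (h 0).1
  simp only at h1 h2 h3
  obtain ⟨u0, u1, u2⟩ := steep_limit fun n => (h n).2.1
  obtain ⟨v0, v1, v2⟩ := steep_limit fun n => (h n).2.2
  simp only [PiLp.neg_apply, neg_eq_zero] at u0 u1 u2 v0 v1 v2
  have A := up_cases hf (c := 1) (h1.trans h2) one_ne_zero u0 u1 (by linarith)
  have B := up_cases hf (c := -1) (h2.trans h3) (by norm_num) v0 v1 (by linarith)
  rcases A with ⟨A1, A2, A3⟩ | ⟨rfl, A2, A3, A4⟩ <;> rcases B with ⟨B1, B2, B3⟩ | ⟨rfl, B2, B3, B4⟩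
  · have hab : a ≠ b := by
      rintro rfl
      rcases h3.lt_or_eq with h | rfl
      · exact hD.2 a c d A1.ne h.ne B1.ne A2 (A2.symm.trans B2)
      · linarith
    have hbc : b ≠ c := by
      rintro rfl
      exact hD.2 a b d A1.ne B1.ne (A1.trans B1).ne A2 B2
    have hcd : c ≠ d := by
      rintro rfl
      exact hD.2 a b c hab B1.ne A1.ne (A2.trans B2.symm) B2
    exact ⟨⟨A1.ne, A2, by linarith⟩, ⟨B1.ne', B2.symm, by simp only; linarith⟩,
      lt_of_le_of_ne h1 hab, lt_of_le_of_ne h2 hbc, lt_of_le_of_ne h3 hcd⟩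
  · obtain rfl : b = c := le_antisymm h2 h3
    exact absurd (cross2_left B2 B3) (hD.1 b a A1.ne' A2.symm)
  · obtain rfl : a = b := le_antisymm h1 h2
    exact absurd (cross2_left A2 A3) (hD.1 a d B1.ne B2)
  · obtain rfl : a = b := le_antisymm h1 h2
    linarith

lemma inter_ZY {f : ℝ → E3} (hf : IsLongKnot f) (hD : OnlyDoubleK f)
    {q : ℝ × ℝ × ℝ} (h : ∀ n : ℕ, q ∈ ZY f (1 / ((n : ℝ) + 2))) : False := by
  obtain ⟨a, b, c⟩ := q
  obtain ⟨h1, h2⟩ := (h 0).1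
  simp only at h1 h2
  obtain ⟨u0, u1, u2⟩ := steep_limit fun n => (h n).2.1
  obtain ⟨v0, v1, v2⟩ := steep_limit fun n => (h n).2.2
  simp only [PiLp.neg_apply, neg_eq_zero] at u0 u1 u2 v0 v1 v2
  have A := up_cases hf (c := 1) h1 one_ne_zero u0 u1 (by linarith)
  have B := up_cases hf (c := -1) h2 (by norm_num) v0 v1 (by linarith)
  rcases A with ⟨A1, A2, A3⟩ | ⟨rfl, A2, A3, A4⟩ <;> rcases B with ⟨B1, B2, B3⟩ | ⟨rfl, B2, B3, B4⟩
  · exact hD.2 a b c A1.ne B1.ne (A1.trans B1).ne A2 B2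
  · exact absurd (cross2_left B2 B3) (hD.1 b a A1.ne' A2.symm)
  · exact absurd (cross2_left A2 A3) (hD.1 a c B1.ne B2)
  · linarith

lemma one_div_bounds (n : ℕ) : (0 : ℝ) < 1 / ((n : ℝ) + 2) ∧ 1 / ((n : ℝ) + 2) ≤ 1 / 2 := by
  constructor
  · positivity
  · apply one_div_le_one_div_of_le <;> linarith [(Nat.cast_nonneg n : (0 : ℝ) ≤ n)]

lemma exists_ZX {f : ℝ → E3} (hf : IsLongKnot f) (hD : OnlyDoubleK f)
    {U : Set ((ℝ × ℝ) × (ℝ × ℝ))} (hU : IsOpen U) (hK : KX f ⊆ U) :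
    ∃ e > (0 : ℝ), ZX f e ⊆ U := by
  have hanti : Antitone fun n : ℕ => ZX f (1 / ((n : ℝ) + 2)) := by
    intro m n hmn
    refine ZX_mono (one_div_bounds n).1 ?_
    apply one_div_le_one_div_of_le (by positivity)
    have : (m : ℝ) ≤ n := by exact_mod_cast hmn
    linarith
  obtain ⟨n, hn⟩ := exists_subset_nhds_of_isCompact (directed_of_isDirected_le hanti)
    (fun n => isCompact_ZX hf (one_div_bounds n).1 (one_div_bounds n).2) (U := U)
    (fun x hx => hU.mem_nhds (hK (inter_ZX hf hD (by simpa using hx))))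
  exact ⟨_, (one_div_bounds n).1, hn⟩

lemma exists_ZY {f : ℝ → E3} (hf : IsLongKnot f) (hD : OnlyDoubleK f) :
    ∃ e > (0 : ℝ), ZY f e ⊆ ∅ := by
  have hanti : Antitone fun n : ℕ => ZY f (1 / ((n : ℝ) + 2)) := by
    intro m n hmn
    refine ZY_mono (one_div_bounds n).1 ?_
    apply one_div_le_one_div_of_le (by positivity)
    have : (m : ℝ) ≤ n := by exact_mod_cast hmn
    linarith
  obtain ⟨n, hn⟩ := exists_subset_nhds_of_isCompact (directed_of_isDirected_le hanti)
    (fun n => isCompact_ZY hf (one_div_bounds n).1 (one_div_bounds n).2) (U := ∅)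
    (fun x hx => (inter_ZY hf hD (by simpa using hx)).elim)
  exact ⟨_, (one_div_bounds n).1, hn⟩

lemma KX_subset_ZX {f : ℝ → E3} (hf : IsLongKnot f) {e : ℝ} (he : 0 < e) : KX f ⊆ ZX f e := by
  rintro ⟨⟨a, c⟩, ⟨d, b⟩⟩ ⟨⟨A1, A2, A3⟩, ⟨B1, B2, B3⟩, h1, h2, h3⟩
  simp only [pr12, pr3, Prod.mk.injEq] at A2 A3 B2 B3 h1 h2 h3
  refine ⟨⟨h1.le, h2.le, h3.le⟩, steep_Phi hf.1 (h1.trans h2) ?_,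
    steep_neg_Phi hf.1 (h2.trans h3) ?_⟩
  · simp only [Steep, PiLp.sub_apply, A2.1, A2.2, sub_self, abs_zero]
    constructor <;> nlinarith
  · simp only [Steep, PiLp.sub_apply, B2.1, B2.2, sub_self, abs_zero]
    constructor <;> nlinarith

lemma isCompact_KX {f : ℝ → E3} (hf : IsLongKnot f) (hD : OnlyDoubleK f) : IsCompact (KX f) := by
  have : KX f = ⋂ n : ℕ, ZX f (1 / ((n : ℝ) + 2)) := by
    apply Subset.antisymm
    · exact subset_iInter fun n => KX_subset_ZX hf (one_div_bounds n).1
    · exact fun q hq => inter_ZX hf hD (by simpa using hq)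
  rw [this]
  refine (isCompact_ZX hf (one_div_bounds 0).1 (one_div_bounds 0).2).of_isClosed_subset ?_
    (iInter_subset _ 0)
  exact isClosed_iInter fun n => (isCompact_ZX hf (one_div_bounds n).1 (one_div_bounds n).2).isClosed

lemma finite_KX {f : ℝ → E3} (hf : IsLongKnot f) (hD : OnlyDoubleK f) : (KX f).Finite := by
  apply (isCompact_KX hf hD).finite
  rw [isDiscrete_iff_forall_mem_exists_isOpen]
  intro q hq
  obtain ⟨U, -, hU, hqU, hU', -⟩ := local_integral hf.1 hq.1
    (hD.1 _ _ hq.1.1.symm hq.1.2.1.symm) univ_mem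
  obtain ⟨V, -, hV, hqV, hV', -⟩ := local_integral hf.1 hq.2.1
    (hD.1 _ _ hq.2.1.1.symm hq.2.1.2.1.symm) univ_mem
  refine ⟨U ×ˢ V, hU.prod hV, ?_⟩
  ext p
  constructor
  · rintro ⟨⟨h1, h2⟩, h3⟩
    exact Prod.ext (hU' _ h1 h3.1) (hV' _ h2 h3.2.1)
  · rintro rfl
    exact ⟨⟨hqU, hqV⟩, hq⟩

lemma wedge222_ne {g : E3 → ℝ} {h k l : E6 → E3} {x : E6} (hw : wedge222 g h k l x ≠ 0) :
    g (h x) ≠ 0 ∧ g (k x) ≠ 0 ∧ g (l x) ≠ 0 := by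
  refine ⟨?_, ?_, ?_⟩ <;> intro h0 <;> apply hw <;> simp [wedge222, form2, h0]

lemma IY_zero {f : ℝ → E3} (hf : IsLongKnot f) (hD : OnlyDoubleK f) :
    ∃ ε₀ > (0 : ℝ), ∀ ε : ℝ, 0 < ε → ε < ε₀ → ∀ g : E3 → ℝ, IsEtaForm ε g → IY f g = 0 := by
  obtain ⟨e, he, hZ⟩ := exists_ZY hf hD
  refine ⟨min (1 / 2) (e / 2), by positivity, fun ε hε hlt g hg => ?_⟩
  have h1 : ε ≤ 1 / 2 := hlt.le.trans (min_le_left _ _)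
  have h2 : 2 * ε ≤ e := by linarith [hlt.le.trans (min_le_right _ _)]
  apply setIntegral_eq_zero_of_forall_eq_zero
  rintro x ⟨hx0, hx1, hp0, hp1, hp2⟩
  by_contra hne
  obtain ⟨g0, g1, g2⟩ := wedge222_ne hne
  have s0 := steep_of_supp hg h1 h2 (sub_ne_zero.2 hp0) g0
  have s1 := steep_of_supp hg h1 h2 (sub_ne_zero.2 hp1.symm) g1
  have s2 := steep_of_supp hg h1 h2 (sub_ne_zero.2 hp2) g2
  have t0 := s1.add s0
  have t2 := s1.add s2
  rw [sub_add_sub_cancel] at t0 t2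
  exact hZ (show (x 0, x 1, x 2) ∈ ZY f e from
    ⟨⟨hx0.le, hx1.le⟩, steep_Phi hf.1 hx0 t0, steep_neg_Phi hf.1 hx1 t2⟩)

/-- The open set of `X`-configurations, in the coordinates of `T4`. -/
def CQ : Set ((ℝ × ℝ) × (ℝ × ℝ)) :=
  {q | q.1.1 < q.2.2 ∧ q.2.2 < q.1.2 ∧ q.1.2 < q.2.1}

lemma isOpen_CQ : IsOpen CQ := by
  simp only [CQ, ofPred_and]
  refine IsOpen.inter ?_ (IsOpen.inter ?_ ?_) <;> apply isOpen_lt <;> fun_prop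

lemma T4_preimage : T4 ⁻¹' CX = CQ := by
  ext q; simp [CX, CQ, T4]

lemma IX_eq {f : ℝ → E3} (hf : IsLongKnot f) (g : E3 → ℝ) :
    IX f g = ∫ q in CQ, AA f g q.1 * AA f g q.2 := by
  unfold IX
  rw [← mp_T4.setIntegral_preimage_emb emb_T4, T4_preimage]
  refine setIntegral_congr_fun isOpen_CQ.measurableSet fun q hq => ?_
  have hq' : T4 q ∈ CX := by rw [← T4_preimage] at hq; exact hq
  rw [omegaX_eq g (hf.1.differentiable (by simp)) hf.2.1 hq']
  simp [T4]

lemma local_product {f : ℝ → E3} (hf : IsLongKnot f) (hD : OnlyDoubleK f)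
    {q : (ℝ × ℝ) × (ℝ × ℝ)} (hq : q ∈ KX f) {O : Set ((ℝ × ℝ) × (ℝ × ℝ))} (hO : O ∈ 𝓝 q) :
    ∃ W ⊆ O, IsOpen W ∧ q ∈ W ∧ ∃ ε₀ > (0 : ℝ), ∀ ε, 0 < ε → ε < ε₀ → ∀ g, IsEtaForm ε g →
      IntegrableOn (fun q => AA f g q.1 * AA f g q.2) W ∧
        ∫ q in W, AA f g q.1 * AA f g q.2 = csignK f q.1 * csignK f q.2 := by
  obtain ⟨O₁, hO₁, O₂, hO₂, hsub⟩ := mem_nhds_prod_iff.1 hO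
  obtain ⟨U, hUO, hU, hqU, -, ε₁, hε₁, H₁⟩ := local_integral hf.1 hq.1
    (hD.1 _ _ hq.1.1.symm hq.1.2.1.symm) hO₁
  obtain ⟨V, hVO, hV, hqV, -, ε₂, hε₂, H₂⟩ := local_integral hf.1 hq.2.1
    (hD.1 _ _ hq.2.1.1.symm hq.2.1.2.1.symm) hO₂
  refine ⟨U ×ˢ V, (prod_mono hUO hVO).trans hsub, hU.prod hV, ⟨hqU, hqV⟩, min ε₁ ε₂,
    lt_min hε₁ hε₂, fun ε h0 h1 g hg => ?_⟩
  obtain ⟨I₁, J₁⟩ := H₁ ε h0 (h1.trans_le (min_le_left _ _)) g hg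
  obtain ⟨I₂, J₂⟩ := H₂ ε h0 (h1.trans_le (min_le_right _ _)) g hg
  constructor
  · have := Integrable.mul_prod I₁ I₂
    rw [Measure.prod_restrict] at this
    exact this
  · rw [← J₁, ← J₂]
    exact setIntegral_prod_mul (μ := (volume : Measure (ℝ × ℝ)))
      (ν := (volume : Measure (ℝ × ℝ))) (AA f g) (AA f g) U V

lemma IX_local {f : ℝ → E3} (hf : IsLongKnot f) (hD : OnlyDoubleK f) :
    ∃ ε₀ > (0 : ℝ), ∀ ε : ℝ, 0 < ε → ε < ε₀ → ∀ g : E3 → ℝ, IsEtaForm ε g →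
      IX f g = pairXK f := by
  have hfin := finite_KX hf hD
  obtain ⟨D, hDo, hDd⟩ := hfin.t2_separation
  have hloc : ∀ q : KX f, ∃ W ⊆ D q ∩ CQ, IsOpen W ∧ (q : (ℝ × ℝ) × (ℝ × ℝ)) ∈ W ∧
      ∃ ε₀ > (0 : ℝ), ∀ ε, 0 < ε → ε < ε₀ → ∀ g, IsEtaForm ε g →
      IntegrableOn (fun q => AA f g q.1 * AA f g q.2) W ∧
        ∫ q in W, AA f g q.1 * AA f g q.2 = csignK f q.1.1 * csignK f q.1.2 := by
    intro q
    refine local_product hf hD q.2 (inter_mem ((hDo q).2.mem_nhds (hDo q).1)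
      (isOpen_CQ.mem_nhds ?_))
    exact q.2.2.2
  choose W hWsub hWo hqW E hE hW using hloc
  have : Finite (KX f) := hfin
  have : Fintype (KX f) := Fintype.ofFinite _
  obtain ⟨e, he, hZ⟩ := exists_ZX hf hD (U := ⋃ q, W q) (isOpen_iUnion hWo)
    (fun q hq => mem_iUnion.2 ⟨⟨q, hq⟩, hqW _⟩)
  obtain ⟨ε₁, hε₁, hE₁⟩ : ∃ ε₁ > (0 : ℝ), ∀ q, ε₁ ≤ E q := by
    rcases isEmpty_or_nonempty (KX f) with h | h
    · exact ⟨1, one_pos, fun q => h.elim q⟩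
    · obtain ⟨q₀, h0⟩ := Finite.exists_min E
      exact ⟨E q₀, hE q₀, h0⟩
  refine ⟨min ε₁ (min (1 / 2) (e / 2)), by positivity, fun ε hε hlt g hg => ?_⟩
  have h0 : ε < ε₁ := hlt.trans_le (min_le_left _ _)
  have h1 : ε ≤ 1 / 2 := hlt.le.trans ((min_le_right _ _).trans (min_le_left _ _))
  have h2 : 2 * ε ≤ e := by
    linarith [hlt.le.trans ((min_le_right _ _).trans (min_le_right _ _))]
  have hW' := fun q => hW q ε hε (h0.trans_le (hE₁ q)) g hg
  have hcover : ∫ q in CQ, AA f g q.1 * AA f g q.2 =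
      ∫ q in ⋃ r, W r, AA f g q.1 * AA f g q.2 := by
    refine setIntegral_eq_of_subset_of_forall_sdiff_eq_zero isOpen_CQ.measurableSet
      (iUnion_subset fun r => (hWsub r).trans inter_subset_right) ?_
    rintro ⟨⟨a, c⟩, ⟨d, b⟩⟩ ⟨⟨hab, hbc, hcd⟩, hn⟩
    simp only at hab hbc hcd
    by_contra hne
    have g1 : g (unitv (f c - f a)) ≠ 0 := by
      intro h; apply hne; simp [AA, h]
    have g2 : g (unitv (f b - f d)) ≠ 0 := by
      intro h; apply hne; simp [AA, h]
    have s1 := steep_of_supp hg h1 h2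
      (sub_ne_zero.2 fun h => (hab.trans hbc).ne' (hf.2.1 h)) g1
    have s2 := steep_of_supp hg h1 h2
      (sub_ne_zero.2 fun h => (hbc.trans hcd).ne (hf.2.1 h)) g2
    exact hn (hZ ⟨⟨hab.le, hbc.le, hcd.le⟩, steep_Phi hf.1 (hab.trans hbc) s1,
      steep_neg_Phi hf.1 (hbc.trans hcd) s2⟩)
  rw [IX_eq hf, hcover, integral_iUnion_fintype (fun q => (hWo q).measurableSet) ?_
    (fun q => (hW' q).1)]
  · simp only [fun q => (hW' q).2]
    have hp : pairXK f = ∑ᶠ q ∈ KX f, csignK f q.1 * csignK f q.2 := rfl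
    rw [hp, finsum_mem_eq_finite_toFinset_sum _ hfin]
    rw [Finset.sum_subtype _ (p := fun q => q ∈ KX f) (by simp)]
  · intro q r hqr
    exact (hDd q.2 r.2 (fun h => hqr (Subtype.ext h))).mono
      ((hWsub q).trans inter_subset_left) ((hWsub r).trans inter_subset_left)

/-- localization of the knot integrals at double crossings. Let `f`
be a long knot whose diagram has only transverse double crossings. Then, with `η = η_ε`
a 2-form as specified for each `ε`, one has `lim_{ε→0} I_X(f) = ⟨X, G_D⟩`, and for all
sufficiently small `ε > 0` one has `I_Y(f) = 0`. -/
theorem statement11 (f : ℝ → E3) (hf : IsLongKnot f) (hD : OnlyDoubleK f) :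
    (∀ G : ℝ → E3 → ℝ, (∀ ε : ℝ, 0 < ε → IsEtaForm ε (G ε)) →
      Tendsto (fun ε => IX f (G ε)) (𝓝[>] 0) (𝓝 (pairXK f))) ∧
    ∃ ε₀ > (0 : ℝ), ∀ ε : ℝ, 0 < ε → ε < ε₀ → ∀ g : E3 → ℝ, IsEtaForm ε g →
      IY f g = 0 := by
  refine ⟨fun G hG => ?_, IY_zero hf hD⟩
  obtain ⟨ε₀, h0, H⟩ := IX_local hf hD
  refine tendsto_const_nhds.congr' ?_
  filter_upwards [Ioo_mem_nhdsGT h0] with ε hε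
  exact (H ε hε.1 hε.2 (G ε) (hG ε hε.1)).symm
end
end

section
/- For every choice of signs s₁, s₂, s₃ ∈ {+1, −1}, every model triple point of type (←, s₁, s₂, s₃) or (→, s₁, s₂, s₃), and all sufficiently small ε > 0, the Y-graph integrals over the model vanish: I_Y^{←,s₁,s₂,s₃} = I_Y^{→,s₁,s₂,s₃} = 0. -/
open MeasureTheory Filter Topology Set

noncomputable section

/-! ### Symmetry of the model: rotation by `π` about the vertical axis -/

/-- The signs of the symmetry on the six coordinates. -/
def dsg (i : Fin 6) : ℝ := if i = 5 then 1 else -1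

/-- Rotation by `π` about the vertical axis of `ℝ³`. -/
def Rot : E3 ≃ₗᵢ[ℝ] E3 :=
  LinearIsometryEquiv.piLpCongrRight 2 (fun i : Fin 3 =>
    if i = 2 then LinearIsometryEquiv.refl ℝ ℝ else LinearIsometryEquiv.neg ℝ)

/-- The linear part of the symmetry of the configuration space. -/
def LinS : E6 ≃ₗᵢ[ℝ] E6 :=
  LinearIsometryEquiv.piLpCongrRight 2 (fun i : Fin 6 =>
    if i = 5 then LinearIsometryEquiv.refl ℝ ℝ else LinearIsometryEquiv.neg ℝ)

theorem LinS_apply (x : E6) (i : Fin 6) : LinS x i = dsg i * x i := by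
  fin_cases i <;> simp [LinS, dsg]

theorem Rot_apply (x : E3) (i : Fin 3) : Rot x i = if i = 2 then x i else - x i := by
  fin_cases i <;> simp [Rot]

theorem Rot_eq_act2 (x : E3) : Rot x = act2 (-1) x := by
  ext i
  fin_cases i <;> simp [Rot_apply, act2, mk3]

theorem LinS_single (i : Fin 6) :
    LinS (EuclideanSpace.single i 1) = dsg i • EuclideanSpace.single i (1 : ℝ) := by
  ext j
  by_cases h : j = i
  · subst h; simp [LinS_apply]
  · simp [LinS_apply, h]

/-- The translation part of the symmetry. -/
def transS (c d : ℝ) : E6 :=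
  EuclideanSpace.single 3 (2 * c) + EuclideanSpace.single 4 (2 * d)

/-- The symmetry of the configuration space. -/
def PhiS (c d : ℝ) (x : E6) : E6 := transS c d + LinS x

theorem PhiS_mp (c d : ℝ) : MeasurePreserving (PhiS c d) := by
  exact (measurePreserving_add_left volume (transS c d)).comp LinS.measurePreserving

theorem PhiS_emb (c d : ℝ) : MeasurableEmbedding (PhiS c d) := by
  exact (measurableEmbedding_addLeft (transS c d)).comp
    LinS.toHomeomorph.measurableEmbedding

theorem pdv_PhiS (c d : ℝ) (h : E6 → E3) (hh : ∀ x, h (PhiS c d x) = Rot (h x))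
    (i : Fin 6) (x : E6) : dsg i • pdv h i (PhiS c d x) = Rot (pdv h i x) := by
  have e1 : fderiv ℝ (fun x => h (transS c d + LinS x)) x =
      (fderiv ℝ h (PhiS c d x)).comp (LinS.toContinuousLinearEquiv : E6 →L[ℝ] E6) := by
    have := LinS.toContinuousLinearEquiv.comp_right_fderiv
      (f := fun y => h (transS c d + y)) (x := x)
    rw [fderiv_comp_add_left] at this
    exact this
  have e2 : fderiv ℝ (fun x => Rot (h x)) x =
      (Rot.toContinuousLinearEquiv : E3 →L[ℝ] E3).comp (fderiv ℝ h x) :=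
    Rot.toContinuousLinearEquiv.comp_fderiv (f := h) (x := x)
  have e3 : (fun x => h (transS c d + LinS x)) = fun x => Rot (h x) := funext hh
  rw [e3, e2] at e1
  have e4 := congrArg (fun T => T (EuclideanSpace.single i (1 : ℝ))) e1
  have e5 : Rot (pdv h i x) = fderiv ℝ h (PhiS c d x) (LinS (EuclideanSpace.single i 1)) := e4
  rw [e5, LinS_single, map_smul]
  rfl

theorem det3_Rot (p v w : E3) : det3 (Rot p) (Rot v) (Rot w) = det3 p v w := by
  simp [det3, Rot_apply]
  ring

theorem det3_smul (p v w : E3) (r s : ℝ) : det3 p (r • v) (s • w) = r * s * det3 p v w := by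
  simp [det3]; ring

theorem dsg_sq (i : Fin 6) : dsg i * dsg i = 1 := by
  unfold dsg; split_ifs <;> norm_num

theorem form2_PhiS (c d : ℝ) (g : E3 → ℝ) (h : E6 → E3)
    (hg : ∀ x, g (Rot (h x)) = g (h x))
    (hh : ∀ x, h (PhiS c d x) = Rot (h x)) (x : E6) (i j : Fin 6) :
    form2 g h (PhiS c d x) i j = dsg i * dsg j * form2 g h x i j := by
  have key : ∀ i, pdv h i (PhiS c d x) = dsg i • Rot (pdv h i x) := by
    intro i
    rw [← pdv_PhiS c d h hh i x, smul_smul, dsg_sq, one_smul]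
  unfold form2
  rw [key i, key j, hh, hg, det3_smul, det3_Rot]
  ring

theorem wedge222_PhiS (c d : ℝ) (g : E3 → ℝ) (h k l : E6 → E3)
    (hg : ∀ x, g (Rot (h x)) = g (h x)) (kg : ∀ x, g (Rot (k x)) = g (k x))
    (lg : ∀ x, g (Rot (l x)) = g (l x))
    (hh : ∀ x, h (PhiS c d x) = Rot (h x)) (kh : ∀ x, k (PhiS c d x) = Rot (k x))
    (lh : ∀ x, l (PhiS c d x) = Rot (l x)) (x : E6) :
    wedge222 g h k l (PhiS c d x) = - wedge222 g h k l x := by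
  unfold wedge222
  rw [← mul_neg, ← Finset.sum_neg_distrib]
  congr 1
  refine Finset.sum_congr rfl fun σ _ => ?_
  rw [form2_PhiS c d g h hg hh, form2_PhiS c d g k kg kh, form2_PhiS c d g l lg lh]
  have hp : ∏ i, dsg (σ i) = -1 := by
    rw [Equiv.prod_comp σ dsg]
    simp [Fin.prod_univ_succ, dsg]
  simp only [Fin.prod_univ_six] at hp
  linear_combination (((Equiv.Perm.sign σ : ℤ) : ℝ) * form2 g h x (σ 0) (σ 1) *
    form2 g k x (σ 2) (σ 3) * form2 g l x (σ 4) (σ 5)) * hp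

theorem unitv_Rot (w : E3) : unitv (Rot w) = Rot (unitv w) := by
  simp [unitv]

theorem eta_Rot {ε : ℝ} {g : E3 → ℝ} (hg : IsEtaForm ε g) (w : E3) :
    g (Rot (unitv w)) = g (unitv w) := by
  by_cases hw : w = 0
  · simp [hw, unitv]
  · rw [Rot_eq_act2]
    refine hg.2.2.1 (-1) (by simp) _ ?_
    have : ‖w‖ ≠ 0 := by simpa using hw
    simp [unitv, norm_smul, this]

theorem sub_PhiS {c d : ℝ} {a v : E3} (hv : v 2 = 0) (h0 : a 0 = c) (h1 : a 1 = d)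
    (x : E6) (i : Fin 6) (hi : i ≠ 5) :
    ptY (PhiS c d x) - seg a v (PhiS c d x i) = Rot (ptY x - seg a v (x i)) ∨ i = 3 ∨ i = 4 := by
  by_cases h3 : i = 3
  · exact Or.inr (Or.inl h3)
  by_cases h4 : i = 4
  · exact Or.inr (Or.inr h4)
  left
  ext j
  fin_cases j <;>
    simp [Rot_apply, ptY, mk3, seg, PhiS, transS, LinS_apply, dsg, hv, h0, h1, hi, h3, h4] <;>
    ring

/-- vanishing of the model `Y`-integrals at triple points. For every
choice of signs `s₁, s₂, s₃ ∈ {+1, -1}`, every model triple point of type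
`(←, s₁, s₂, s₃)` or `(→, s₁, s₂, s₃)` and all sufficiently small `ε > 0`, the `Y`-graph
integral over the model vanishes: `I_Y^{←,s₁,s₂,s₃} = I_Y^{→,s₁,s₂,s₃} = 0`. -/
theorem statement12 (s1 s2 s3 : ℝ) (h1 : s1 = 1 ∨ s1 = -1) (h2 : s2 = 1 ∨ s2 = -1)
    (h3 : s3 = 1 ∨ s3 = -1) (a v : Fin 3 → E3) (δ : ℝ) (hδ : 0 < δ)
    (hM : ModelLeft a v s1 s2 s3 ∨ ModelRight a v s1 s2 s3) :
    ∃ ε₀ > (0 : ℝ), ∀ ε : ℝ, 0 < ε → ε < ε₀ → ∀ g : E3 → ℝ, IsEtaForm ε g →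
      IYmodel a v δ g = 0 := by
  have hT : IsModelTriple a v := by
    rcases hM with h | h
    · exact h.1
    · exact h.1
  obtain ⟨hv, -, h01, h12, -, -, -⟩ := hT
  refine ⟨1, one_pos, fun ε _ _ g hg => ?_⟩
  simp only [pr12, Prod.mk.injEq] at h01 h12
  set c := a 1 0 with hc
  set d := a 1 1 with hd
  have s0 : ∀ x, ptY (PhiS c d x) - seg (a 0) (v 0) (PhiS c d x 0) =
      Rot (ptY x - seg (a 0) (v 0) (x 0)) := fun x => by
    simpa using sub_PhiS (hv 0) h01.1 h01.2 x 0 (by decide)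
  have s1 : ∀ x, ptY (PhiS c d x) - seg (a 1) (v 1) (PhiS c d x 1) =
      Rot (ptY x - seg (a 1) (v 1) (x 1)) := fun x => by
    simpa using sub_PhiS (hv 1) hc.symm hd.symm x 1 (by decide)
  have s2 : ∀ x, ptY (PhiS c d x) - seg (a 2) (v 2) (PhiS c d x 2) =
      Rot (ptY x - seg (a 2) (v 2) (x 2)) := fun x => by
    have := sub_PhiS (hv 2) h12.1.symm h12.2.symm x 2 (by decide)
    rcases this with h | h | h
    · exact h
    · exact absurd h (by decide)
    · exact absurd h (by decide)
  have s1n : ∀ x, seg (a 1) (v 1) (PhiS c d x 1) - ptY (PhiS c d x) =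
      Rot (seg (a 1) (v 1) (x 1) - ptY x) := fun x => by
    rw [← neg_sub, s1, ← map_neg, neg_sub]
  have habs : ∀ x : E6, ∀ i : Fin 6, i ≠ 3 → i ≠ 4 → |PhiS c d x i| = |x i| := by
    intro x i h3 h4
    simp only [PhiS, transS, PiLp.add_apply, LinS_apply, dsg]
    split_ifs <;> simp [h3, h4]
  have hne : ∀ p q p' q' : E3, p' - q' = Rot (p - q) → (p' ≠ q' ↔ p ≠ q) := by
    intro p q p' q' h
    rw [← sub_ne_zero, h, ← sub_ne_zero (a := p)]
    exact not_congr (map_eq_zero_iff Rot Rot.injective)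
  unfold IYmodel
  set S : Set E6 := {x : E6 | |x 0| < δ ∧ |x 1| < δ ∧ |x 2| < δ ∧
      ptY x ≠ seg (a 0) (v 0) (x 0) ∧ ptY x ≠ seg (a 1) (v 1) (x 1) ∧
      ptY x ≠ seg (a 2) (v 2) (x 2)} with hS
  have hpre : PhiS c d ⁻¹' S = S := by
    ext x
    simp only [hS, mem_preimage, mem_setOf_eq]
    rw [habs x 0 (by decide) (by decide), habs x 1 (by decide) (by decide),
      habs x 2 (by decide) (by decide), hne _ _ _ _ (s0 x), hne _ _ _ _ (s1 x),
      hne _ _ _ _ (s2 x)]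
  have hint := (PhiS_mp c d).setIntegral_preimage_emb (PhiS_emb c d)
    (wedge222 g (fun x => unitv (ptY x - seg (a 0) (v 0) (x 0)))
      (fun x => unitv (seg (a 1) (v 1) (x 1) - ptY x))
      (fun x => unitv (ptY x - seg (a 2) (v 2) (x 2)))) S
  rw [hpre] at hint
  have hw := wedge222_PhiS c d g (fun x => unitv (ptY x - seg (a 0) (v 0) (x 0)))
      (fun x => unitv (seg (a 1) (v 1) (x 1) - ptY x))
      (fun x => unitv (ptY x - seg (a 2) (v 2) (x 2)))
      (fun x => eta_Rot hg _) (fun x => eta_Rot hg _) (fun x => eta_Rot hg _)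
      (fun x => by simp only [s0, unitv_Rot]) (fun x => by simp only [s1n, unitv_Rot])
      (fun x => by simp only [s2, unitv_Rot])
  simp only [hw, integral_neg] at hint
  linarith
end
end
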